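/- Assume additionally that ‖∇_θ ℓ(W_θ, z)‖ ≤ L for all θ ∈ ℝ^d and z ∈ 𝒵 (i.e., ℓ is L-Lipschitz in the parameter) and that every batch has constant size |V_t| = K. Then, for any choice of measurable estimate functions π_{J,t} as in the setting, the expected generalization error of SGLD satisfies E_{P_{W,S}}[gen(W, S)] ≤ (2L/K)(b − a) · E_{(J, S̃, U, V^T)}[ sqrt( Σ_{t ∈ 𝒯_J(V^T)} E_t[ (η_t²/σ_t²) (U_J − π_{J,t})² ] ) ], where E_t[·] denotes conditional expectation given (J, U, S̃, V_1, …, V_T). -/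

import Mathlib

open MeasureTheory ProbabilityTheory ENNReal Classical

/-- Discrete σ-algebra on finsets (finite, hence standard Borel). -/
instance {α : Type*} : MeasurableSpace (Finset α) := ⊤

/-- Discrete σ-algebra on `Option Bool`. -/
instance : MeasurableSpace (Option Bool) := ⊤

/-- The index `i + u·N` in the super-sample: `Z_i = Z̃_{i + U_i N}`. -/
def subIdx (N : ℕ) (i : Fin N) (u : Bool) : Fin (2 * N) :=
  ⟨i.val + if u then N else 0, by have := i.isLt; cases u <;> simp <;> omega⟩

/-- The Bernoulli(1/2) distribution on `Bool`. -/
noncomputable def bern : Measure Bool := (PMF.bernoulli (1 / 2) (by norm_num)).toMeasure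

/-!
Replacing fresh data by the points `Z̃_{i + (1 - U_i) N}` left out of the training sample, and the
average over `i` by the random index `J`, turns the expected generalization error into the mean of
the loss at the left-out point of the pair `(Z̃_J, Z̃_{J+N})` minus the loss at its training point,
a difference which changes sign when the bit `U_J` is negated.

Given `(J, U, S̃, V^T)`, compare the law of the SGLD trajectory with that of a prior chain whose
gradient at `Z_J` is the mixture of the gradients at `Z̃_J` and `Z̃_{J+N}` with weights
`1 - π_{J,t}` and `π_{J,t}`. The prior chain does not see `U_J`, so the antisymmetric difference has
mean zero under it. By the Donsker–Varadhan inequality and Hoeffding's lemma, its mean under SGLD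
is then at most `(b - a) √(2 KL)`. By the chain rule for the relative entropy and the
Cameron–Martin formula, `KL` is at most the sum over `t` with `J ∈ V_t` of the conditional means of
`(2 L η_t / K)² (U_J - π_{J,t})² / (2 σ_t²)`.
-/

section RelativeEntropy

open InformationTheory

variable {α : Type*} [MeasurableSpace α] {P Q : Measure α} [IsProbabilityMeasure P]
  [IsProbabilityMeasure Q] {f : α → ℝ}

lemma integral_le_toReal_klDiv_add_log_integral_exp (hPQ : klDiv P Q ≠ ∞) (hf : Integrable f P)
    (hexp : Integrable (fun x => Real.exp (f x)) Q) :
    ∫ x, f x ∂P ≤ (klDiv P Q).toReal + Real.log (∫ x, Real.exp (f x) ∂Q) := by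
  obtain ⟨hac, hllr⟩ := klDiv_ne_top_iff.1 hPQ
  have := isProbabilityMeasure_tilted hexp
  have hnonneg := integral_llr_add_sub_measure_univ_nonneg
    (hac.trans (absolutelyContinuous_tilted hexp))
    (integrable_llr_tilted_right hac hf hllr hexp)
  rw [integral_llr_tilted_right hac hf hexp hllr] at hnonneg
  rw [toReal_klDiv_of_measure_eq hac (by simp only [measure_univ])]
  simp only [probReal_univ] at hnonneg
  linarith

lemma klDiv_withDensity_exp (hf : Integrable f P)
    [IsProbabilityMeasure (P.withDensity fun x => ENNReal.ofReal (Real.exp (f x)))] :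
    klDiv P (P.withDensity fun x => ENNReal.ofReal (Real.exp (f x))) =
      ENNReal.ofReal (-∫ x, f x ∂P) := by
  have hmeas : AEStronglyMeasurable (fun x => Real.exp (f x)) P :=
    Real.continuous_exp.comp_aestronglyMeasurable hf.aestronglyMeasurable
  have hpos : 0 ≤ᵐ[P] fun x => Real.exp (f x) := .of_forall fun x => (Real.exp_pos _).le
  have hmass : ∫⁻ x, ENNReal.ofReal (Real.exp (f x)) ∂P = 1 := by
    rw [← setLIntegral_univ, ← withDensity_apply _ .univ, measure_univ]
  have hexp : Integrable (fun x => Real.exp (f x)) P :=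
    (lintegral_ofReal_ne_top_iff_integrable hmeas hpos).1 (hmass ▸ one_ne_top)
  have hone : ∫ x, Real.exp (f x) ∂P = 1 := by
    rw [integral_eq_lintegral_of_nonneg_ae hpos hmeas, hmass, toReal_one]
  have htilted : (P.withDensity fun x => ENNReal.ofReal (Real.exp (f x))) = P.tilted f := by
    simp only [Measure.tilted, hone, div_one]
  have hself : llr P P =ᵐ[P] fun _ => 0 := llr_self P
  have hac : P ≪ P.tilted f := absolutelyContinuous_tilted hexp
  have hllr : Integrable (llr P P) P := (integrable_congr hself).2 (integrable_zero _ _ _)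
  rw [htilted, klDiv_of_ac_of_integrable hac (integrable_llr_tilted_right .rfl hf hllr hexp),
    integral_llr_tilted_right .rfl hf hexp hllr, integral_congr_ae hself, hone, ← htilted]
  simp only [integral_zero, Real.log_one, probReal_univ, zero_sub, add_zero, add_sub_cancel_right]

lemma le_sqrt_of_forall_mul_le {x c k : ℝ} (hc : 0 ≤ c)
    (h : ∀ l : ℝ, 0 < l → l * x ≤ k + c * l ^ 2 / 2) : x ≤ √(2 * c * k) := by
  rcases le_or_gt x 0 with hx | hx
  · exact hx.trans (Real.sqrt_nonneg _)
  rcases hc.eq_or_lt with rfl | hc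
  · have := h ((|k| + 1) / x) (by positivity)
    rw [div_mul_cancel₀ _ hx.ne'] at this
    linarith [le_abs_self k]
  · refine Real.le_sqrt_of_sq_le ?_
    have := h (x / c) (by positivity)
    field_simp at this
    linarith

lemma integral_sub_integral_le_sqrt_of_hasSubgaussianMGF {c : NNReal} (hPQ : klDiv P Q ≠ ∞)
    (hf : Integrable f P) (hsub : HasSubgaussianMGF (fun x => f x - ∫ y, f y ∂Q) c Q) :
    ∫ x, f x ∂P - ∫ x, f x ∂Q ≤ √(2 * c * (klDiv P Q).toReal) := by
  refine le_sqrt_of_forall_mul_le c.2 fun l _ => ?_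
  have hmgf : Real.log (∫ x, Real.exp (l * (f x - ∫ y, f y ∂Q)) ∂Q) ≤ c * l ^ 2 / 2 :=
    (Real.log_le_iff_le_exp (integral_exp_pos (hsub.integrable_exp_mul l))).2 (hsub.mgf_le l)
  have hcenter : Integrable (fun x => f x - ∫ y, f y ∂Q) P := hf.sub (integrable_const _)
  have hDV := integral_le_toReal_klDiv_add_log_integral_exp hPQ (hcenter.const_mul l)
    (hsub.integrable_exp_mul l)
  rw [integral_const_mul, integral_sub hf (integrable_const _), integral_const, probReal_univ,
    one_smul] at hDV
  linarith

lemma integral_sub_integral_le_sqrt_klDiv_of_mem_Icc {a b : ℝ} (hPQ : klDiv P Q ≠ ∞)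
    (hf : Measurable f) (hab : ∀ x, f x ∈ Set.Icc a b) :
    ∫ x, f x ∂P - ∫ x, f x ∂Q ≤ (b - a) * √((klDiv P Q).toReal / 2) := by
  obtain ⟨x₀⟩ := P.nonempty_of_neZero
  have hba : 0 ≤ b - a := sub_nonneg.2 ((hab x₀).1.trans (hab x₀).2)
  have hsub := hasSubgaussianMGF_of_mem_Icc (μ := Q) hf.aemeasurable (.of_forall hab)
  refine (integral_sub_integral_le_sqrt_of_hasSubgaussianMGF hPQ
    (.of_mem_Icc a b hf.aemeasurable (.of_forall hab)) hsub).trans_eq ?_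
  rw [← Real.sqrt_sq hba, ← Real.sqrt_mul (sq_nonneg _), Real.sqrt_sq hba]
  congr 1
  push_cast
  rw [Real.norm_of_nonneg hba]
  ring

end RelativeEntropy

section NoiseKernel

variable {X Y Z : Type*} [MeasurableSpace X] [MeasurableSpace Y] [MeasurableSpace Z]

/-- The law of `F (x, y)` for noise `y` drawn from `γ`, as a kernel in `x`. -/
noncomputable def noiseKernel (γ : Measure Y) (F : X × Y → Z) : Kernel X Z :=
  (Kernel.id ×ₖ Kernel.const X γ).map F

variable {γ : Measure Y} {F : X × Y → Z}

lemma isMarkovKernel_noiseKernel [IsProbabilityMeasure γ] (hF : Measurable F) :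
    IsMarkovKernel (noiseKernel γ F) :=
  Kernel.IsMarkovKernel.map _ hF

lemma noiseKernel_apply [SFinite γ] (hF : Measurable F) (x : X) :
    noiseKernel γ F x = γ.map fun y => F (x, y) := by
  rw [noiseKernel, Kernel.map_apply _ hF, Kernel.prod_apply, Kernel.id_apply, Kernel.const_apply,
    Measure.dirac_prod, Measure.map_map hF (by fun_prop)]
  rfl

lemma compProd_noiseKernel [IsProbabilityMeasure γ] (P : Measure X) [SFinite P]
    (hF : Measurable F) :
    P ⊗ₘ noiseKernel γ F = (P.prod γ).map fun p => (p.1, F p) := by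
  have := isMarkovKernel_noiseKernel (γ := γ) hF
  refine Measure.ext_of_lintegral _ fun φ hφ => ?_
  rw [Measure.lintegral_compProd hφ, lintegral_map hφ (by fun_prop), lintegral_prod _ (by fun_prop)]
  congr 1 with x
  rw [noiseKernel_apply hF, lintegral_map (by fun_prop) (by fun_prop)]

lemma map_prodMk_eq_compProd_noiseKernel {Ω : Type*} [MeasurableSpace Ω] {μ : Measure Ω}
    [IsProbabilityMeasure μ] {f : Ω → X} {e : Ω → Y} (hf : Measurable f) (he : Measurable e)
    (hfe : IndepFun f e μ) (hF : Measurable F) :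
    μ.map (fun ω => (f ω, F (f ω, e ω))) = μ.map f ⊗ₘ noiseKernel (μ.map e) F := by
  have := Measure.isProbabilityMeasure_map (μ := μ) he.aemeasurable
  rw [compProd_noiseKernel _ hF,
    ← (indepFun_iff_map_prod_eq_prod_map_map hf.aemeasurable he.aemeasurable).1 hfe,
    Measure.map_map (by fun_prop) (by fun_prop)]
  rfl

end NoiseKernel

section Gaussian

open InformationTheory
open scoped RealInnerProductSpace

variable {E : Type*} [NormedAddCommGroup E] [InnerProductSpace ℝ E] [FiniteDimensional ℝ E]
  [MeasurableSpace E] [BorelSpace E]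
  {X Z : Type*} [MeasurableSpace X] [MeasurableSpace Z]

lemma integral_cexp_inner_stdGaussian (h t : E) :
    ∫ x, Complex.exp (⟪h, x⟫ + ⟪t, x⟫ * Complex.I) ∂stdGaussian E =
      Complex.exp ((‖h‖ ^ 2 - ‖t‖ ^ 2) / 2 + ⟪h, t⟫ * Complex.I) := by
  let e := stdOrthonormalBasis ℝ E
  have hcoord (x : Fin (Module.finrank ℝ E) → ℝ) :
      Complex.exp (⟪h, ∑ i, x i • e i⟫ + ⟪t, ∑ i, x i • e i⟫ * Complex.I) =
        ∏ i, Complex.exp ((⟪h, e i⟫ + ⟪t, e i⟫ * Complex.I) * x i) := by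
    rw [← Complex.exp_sum]
    simp only [inner_sum, real_inner_smul_right, Complex.ofReal_sum, Complex.ofReal_mul,
      Finset.sum_mul, ← Finset.sum_add_distrib]
    congr! 2
    ring
  have hone (z : ℂ) : ∫ x : ℝ, Complex.exp (z * x) ∂gaussianReal 0 1 = Complex.exp (z ^ 2 / 2) := by
    simpa [complexMGF] using complexMGF_id_gaussianReal (μ := 0) (v := 1) z
  rw [stdGaussian_eq_map_pi_orthonormalBasis e,
    integral_map (Measurable.aemeasurable (by fun_prop)) (by fun_prop)]
  simp_rw [hcoord]
  rw [integral_fintype_prod_eq_prod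
    (fun i (x : ℝ) => Complex.exp ((⟪h, e i⟫ + ⟪t, e i⟫ * Complex.I) * x))]
  simp_rw [hone, ← Complex.exp_sum]
  congr 1
  rw [← Complex.ofReal_pow, ← Complex.ofReal_pow, ← e.sum_sq_inner_left h, ← e.sum_sq_inner_left t,
    ← e.sum_inner_mul_inner h t]
  push_cast
  simp_rw [Finset.sum_mul, ← Finset.sum_sub_distrib, Finset.sum_div, ← Finset.sum_add_distrib]
  refine Finset.sum_congr rfl fun i _ => ?_
  rw [real_inner_comm t, add_sq, mul_pow, Complex.I_sq]
  ring

lemma stdGaussian_map_inner (h : E) :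
    (stdGaussian E).map (fun x => ⟪h, x⟫) = gaussianReal 0 (‖h‖ ^ 2).toNNReal := by
  have hmap := IsGaussian.map_eq_gaussianReal (μ := stdGaussian E) (innerSL ℝ h)
  rwa [integral_strongDual_stdGaussian, variance_dual_stdGaussian, innerSL_apply_norm] at hmap

lemma integrable_exp_inner_stdGaussian (h : E) :
    Integrable (fun x => Real.exp ⟪h, x⟫) (stdGaussian E) := by
  have := integrable_exp_mul_gaussianReal (μ := 0) (v := (‖h‖ ^ 2).toNNReal) 1
  rw [← stdGaussian_map_inner, integrable_map_measure (by fun_prop) (by fun_prop)] at this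
  simpa [Function.comp_def] using this

lemma integral_exp_inner_stdGaussian (h : E) :
    ∫ x, Real.exp ⟪h, x⟫ ∂stdGaussian E = Real.exp (‖h‖ ^ 2 / 2) := by
  have := mgf_gaussianReal (stdGaussian_map_inner h) 1
  simpa [mgf] using this

lemma stdGaussian_map_add_const (h : E) :
    (stdGaussian E).map (· + h) = (stdGaussian E).tilted fun x => ⟪h, x⟫ := by
  have := isProbabilityMeasure_tilted (integrable_exp_inner_stdGaussian h)
  refine Measure.ext_of_charFun (funext fun t => ?_)
  rw [charFun_map_add_const, charFun_stdGaussian, charFun_apply, integral_tilted,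
    integral_exp_inner_stdGaussian]
  have hdiv (x : E) :
      (Real.exp ⟪h, x⟫ / Real.exp (‖h‖ ^ 2 / 2)) • Complex.exp (⟪x, t⟫ * Complex.I) =
        Complex.exp (⟪h, x⟫ + ⟪t, x⟫ * Complex.I) / Complex.exp (‖h‖ ^ 2 / 2) := by
    rw [Complex.real_smul, real_inner_comm x t, Complex.exp_add]
    push_cast
    ring
  simp_rw [hdiv]
  rw [integral_div, integral_cexp_inner_stdGaussian, ← Complex.exp_sub, ← Complex.exp_add]
  congr 1
  ring

lemma prod_stdGaussian_map_add (P : Measure X) [SFinite P] {h : X → E} (hh : Measurable h) :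
    (P.prod (stdGaussian E)).map (fun p => (p.1, p.2 + h p.1)) =
      (P.prod (stdGaussian E)).withDensity
        fun p => ENNReal.ofReal (Real.exp (⟪h p.1, p.2⟫ - ‖h p.1‖ ^ 2 / 2)) := by
  refine Measure.ext_of_lintegral _ fun φ hφ => ?_
  rw [lintegral_map hφ (by fun_prop), lintegral_withDensity_eq_lintegral_mul _ (by fun_prop) hφ,
    lintegral_prod _ (by fun_prop), lintegral_prod _ (by fun_prop)]
  congr 1 with x
  rw [← lintegral_map (f := fun e => φ (x, e)) (g := (· + h x)) (by fun_prop) (by fun_prop),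
    stdGaussian_map_add_const, lintegral_tilted, integral_exp_inner_stdGaussian]
  simp only [Pi.mul_apply, Real.exp_sub]

lemma integral_inner_stdGaussian (h : E) : ∫ x, ⟪h, x⟫ ∂stdGaussian E = 0 :=
  integral_strongDual_stdGaussian (innerSL ℝ h)

lemma klDiv_prod_stdGaussian_map_add {P : Measure X} [IsProbabilityMeasure P] {h : X → E}
    (hh : Measurable h) (hint : Integrable (fun x => ‖h x‖ ^ 2) P) :
    klDiv (P.prod (stdGaussian E))
        ((P.prod (stdGaussian E)).map fun p => (p.1, p.2 + h p.1)) =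
      ENNReal.ofReal (∫ x, ‖h x‖ ^ 2 / 2 ∂P) := by
  have hsq : MemLp h 2 P := (memLp_two_iff_integrable_sq_norm (by fun_prop)).2 hint
  have hinner : Integrable (fun p : X × E => ⟪h p.1, p.2⟫) (P.prod (stdGaussian E)) :=
    ((hsq.integrable one_le_two).norm.mul_prod IsGaussian.integrable_id.norm).mono'
      (by fun_prop) (.of_forall fun p => norm_inner_le_norm _ _)
  have hnorm : Integrable (fun p : X × E => ‖h p.1‖ ^ 2 / 2) (P.prod (stdGaussian E)) :=
    (hint.div_const 2).comp_fst _
  have := Measure.isProbabilityMeasure_map (μ := P.prod (stdGaussian E))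
    (f := fun p => (p.1, p.2 + h p.1)) (by fun_prop)
  rw [prod_stdGaussian_map_add P hh] at this ⊢
  rw [klDiv_withDensity_exp (f := fun p : X × E => ⟪h p.1, p.2⟫ - ‖h p.1‖ ^ 2 / 2)
      (hinner.sub hnorm),
    integral_sub hinner hnorm, integral_prod _ hinner, integral_prod _ hnorm]
  simp only [integral_inner_stdGaussian, integral_zero, integral_const, probReal_univ, one_smul,
    zero_sub, neg_neg]

lemma klDiv_compProd_noiseKernel_stdGaussian_le {P : Measure X} [IsProbabilityMeasure P]
    {A B : X → E} (hA : Measurable A) (hB : Measurable B)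
    (hAB : Integrable (fun x => ‖A x - B x‖ ^ 2) P) {σ : ℝ} (hσ : σ ≠ 0)
    {g : X × E → Z} (hg : Measurable g) :
    klDiv (P ⊗ₘ noiseKernel (stdGaussian E) fun p => g (p.1, A p.1 + σ • p.2))
        (P ⊗ₘ noiseKernel (stdGaussian E) fun p => g (p.1, B p.1 + σ • p.2)) ≤
      ENNReal.ofReal (∫ x, ‖A x - B x‖ ^ 2 / (2 * σ ^ 2) ∂P) := by
  let h : X → E := fun x => σ⁻¹ • (B x - A x)
  let Ψ : X × E → X × Z := fun p => (p.1, g (p.1, A p.1 + σ • p.2))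
  have hh : Measurable h := by fun_prop
  have hΨ : Measurable Ψ := by fun_prop
  have hshift : (fun p => (p.1, g (p.1, B p.1 + σ • p.2))) =
      Ψ ∘ fun p : X × E => (p.1, p.2 + h p.1) := by
    ext1 p
    simp only [Ψ, h, Function.comp_apply, smul_add, smul_inv_smul₀ hσ]
    rw [add_left_comm, add_sub_cancel, add_comm]
  have hnorm (x : X) : ‖h x‖ ^ 2 = ‖A x - B x‖ ^ 2 / σ ^ 2 := by
    rw [norm_smul, mul_pow, norm_inv, inv_pow, Real.norm_eq_abs, sq_abs, norm_sub_rev, mul_comm,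
      div_eq_mul_inv]
  rw [compProd_noiseKernel _ (by fun_prop), compProd_noiseKernel _ (by fun_prop), hshift,
    ← Measure.map_map hΨ (by fun_prop)]
  refine (klDiv_map_le _ _ hΨ).trans ?_
  rw [klDiv_prod_stdGaussian_map_add hh (by simpa only [hnorm] using hAB.div_const _)]
  simp only [hnorm, div_div, mul_comm, le_refl]

end Gaussian

section MarkovChain

open InformationTheory

variable {C X : Type*} [MeasurableSpace C] [MeasurableSpace X] {T : ℕ}

/-- Given `c`, the law at time `j` of the inhomogeneous Markov chain started from `κ₀ c` whose
`t`-th transition kernel is `κ t (c, ·)`. -/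
noncomputable def chainKernel (κ₀ : Kernel C X) (κ : Fin T → Kernel (C × X) X) (j : Fin (T + 1)) :
    Kernel C X :=
  Fin.induction κ₀ (fun t ρ => (ρ ⊗ₖ κ t).snd) j

variable {κ₀ : Kernel C X} {κ η : Fin T → Kernel (C × X) X}

lemma chainKernel_succ (t : Fin T) :
    chainKernel κ₀ κ t.succ = (chainKernel κ₀ κ t.castSucc ⊗ₖ κ t).snd :=
  Fin.induction_succ ..

lemma map_prodMk_eq_compProd_chainKernel {Ω : Type*} [MeasurableSpace Ω] {μ : Measure Ω}
    [SFinite μ] {c : Ω → C} {x : Fin (T + 1) → Ω → X} (hc : Measurable c)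
    (hx : ∀ j, Measurable (x j)) (h₀ : μ.map (fun ω => (c ω, x 0 ω)) = μ.map c ⊗ₘ κ₀)
    (h : ∀ t : Fin T, μ.map (fun ω => ((c ω, x t.castSucc ω), x t.succ ω)) =
      μ.map (fun ω => (c ω, x t.castSucc ω)) ⊗ₘ κ t) (j : Fin (T + 1)) :
    μ.map (fun ω => (c ω, x j ω)) = μ.map c ⊗ₘ chainKernel κ₀ κ j := by
  induction j using Fin.induction with
  | zero => exact h₀
  | succ t ih =>
    have hsucc : (fun ω => (c ω, x t.succ ω)) =
        (fun p => (p.1.1, p.2)) ∘ fun ω => ((c ω, x t.castSucc ω), x t.succ ω) := rfl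
    rw [hsucc, ← Measure.map_map (by fun_prop) (by fun_prop), h t, ih, chainKernel_succ,
      Kernel.snd_eq, Measure.compProd_map measurable_snd, ← Measure.compProd_assoc,
      Measure.map_map (by fun_prop) (by fun_prop)]
    rfl

variable [IsMarkovKernel κ₀] [∀ t, IsMarkovKernel (κ t)]

instance (j : Fin (T + 1)) : IsMarkovKernel (chainKernel κ₀ κ j) := by
  induction j using Fin.induction with
  | zero => assumption
  | succ t _ => rw [chainKernel_succ]; infer_instance

lemma chainKernel_succ_apply (t : Fin T) (c : C) :
    chainKernel κ₀ κ t.succ c = (chainKernel κ₀ κ t.castSucc c ⊗ₘ (κ t).sectR c).snd := by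
  rw [chainKernel_succ, Kernel.snd_apply, Kernel.compProd_apply_eq_compProd_sectR]
  rfl

lemma chainKernel_congr {c c' : C} (h₀ : κ₀ c = κ₀ c')
    (h : ∀ t x, κ t (c, x) = κ t (c', x)) (j : Fin (T + 1)) :
    chainKernel κ₀ κ j c = chainKernel κ₀ κ j c' := by
  induction j using Fin.induction with
  | zero => exact h₀
  | succ t ih =>
    have hsect : (κ t).sectR c = (κ t).sectR c' := Kernel.ext (h t)
    rw [chainKernel_succ_apply, chainKernel_succ_apply, ih, hsect]

lemma klDiv_chainKernel_le [∀ t, IsMarkovKernel (η t)] (c : C) (j : Fin (T + 1)) :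
    klDiv (chainKernel κ₀ κ j c) (chainKernel κ₀ η j c) ≤
      ∑ t with t.castSucc < j, klDiv (chainKernel κ₀ κ t.castSucc c ⊗ₘ (κ t).sectR c)
        (chainKernel κ₀ κ t.castSucc c ⊗ₘ (η t).sectR c) := by
  induction j using Fin.induction with
  | zero => exact (klDiv_self (κ₀ c)).trans_le zero_le
  | succ t ih =>
    have hinsert : Finset.univ.filter (fun s : Fin T => s.castSucc < t.succ) =
        insert t (Finset.univ.filter fun s : Fin T => s.castSucc < t.castSucc) := by
      ext s
      simp [le_iff_eq_or_lt]
    rw [chainKernel_succ_apply, chainKernel_succ_apply, hinsert,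
      Finset.sum_insert (by simp only [Finset.mem_filter, lt_irrefl, and_false, not_false_iff]),
      add_comm]
    refine (klDiv_map_le _ _ measurable_snd).trans ?_
    rw [klDiv_compProd_eq_add]
    gcongr

end MarkovChain

section Independence

variable {Ω X Y Z : Type*} [MeasurableSpace Ω] [MeasurableSpace X] [MeasurableSpace Y]
  [MeasurableSpace Z] {μ : Measure Ω}

lemma indepFun_of_measurable_comap {f : Ω → X} {g : Ω → Y} {h : Ω → Z} (hfg : IndepFun f g μ)
    (hh : Measurable[MeasurableSpace.comap f inferInstance] h) : IndepFun h g μ :=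
  (IndepFun_iff_Indep ..).2 <|
    indep_of_indep_of_le_left ((IndepFun_iff_Indep ..).1 hfg) hh.comap_le

lemma indepFun_prodMk_right [IsProbabilityMeasure μ] {f : Ω → X} {g : Ω → Y} {h : Ω → Z}
    (hf : Measurable f) (hg : Measurable g) (hh : Measurable h) (hfg : IndepFun f g μ)
    (hfgh : IndepFun (fun ω => (f ω, g ω)) h μ) : IndepFun f (fun ω => (g ω, h ω)) μ := by
  have hgh : IndepFun g h μ := hfgh.comp measurable_snd measurable_id
  rw [indepFun_iff_map_prod_eq_prod_map_map (by fun_prop) (by fun_prop)] at hfg hfgh hgh ⊢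
  have := Measure.isProbabilityMeasure_map (μ := μ) hf.aemeasurable
  have := Measure.isProbabilityMeasure_map (μ := μ) hg.aemeasurable
  have := Measure.isProbabilityMeasure_map (μ := μ) hh.aemeasurable
  rw [hgh, ← (measurePreserving_prodAssoc ..).map_eq, ← hfg, ← hfgh,
    Measure.map_map (by fun_prop) (by fun_prop)]
  rfl

lemma indepFun_prodMk_past {T : ℕ} [IsProbabilityMeasure μ] {f : Ω → X} {e : Fin T → Ω → Y}
    (hf : Measurable f) (he : ∀ t, Measurable (e t)) (hiid : iIndepFun e μ)
    (hfe : IndepFun f (fun ω t => e t ω) μ) (t : Fin T) :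
    IndepFun (fun ω => (f ω, fun s : Set.Iio t => e s ω)) (e t) μ := by
  have hpast : IndepFun (fun ω (s : Set.Iio t) => e s ω) (e t) μ := by
    have h := hiid.indepFun_finset (Finset.Iio t) {t} (by simp) he
    have hφ : Measurable fun (y : Finset.Iio t → Y) (s : Set.Iio t) =>
        y ⟨s, Finset.mem_Iio.2 s.2⟩ := by fun_prop
    have hψ : Measurable fun y : ({t} : Finset (Fin T)) → Y => y ⟨t, Finset.mem_singleton_self t⟩ :=
      measurable_pi_apply _
    exact h.comp hφ hψ
  have hjoint : IndepFun (fun ω => (e t ω, fun s : Set.Iio t => e s ω)) f μ :=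
    hfe.symm.comp (φ := fun y => (y t, fun s : Set.Iio t => y s)) (by fun_prop) measurable_id
  have hswap := indepFun_prodMk_right (he t) (by fun_prop) hf hpast.symm hjoint
  exact hswap.symm.comp measurable_swap measurable_id

lemma map_eq_of_map_eq_pi {ι : Type*} [Fintype ι] {e : ι → Ω → Y} (he : ∀ i, Measurable (e i))
    {γ : Measure Y} [IsProbabilityMeasure γ]
    (h : μ.map (fun ω i => e i ω) = Measure.pi fun _ => γ) (i : ι) : μ.map (e i) = γ := by
  rw [← (measurePreserving_eval (fun _ : ι => γ) i).map_eq, ← h,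
    Measure.map_map (by fun_prop) (by fun_prop)]
  rfl

lemma map_eq_pi_stdGaussian {ι κ : Type*} [Fintype ι] [Fintype κ]
    {e : ι → Ω → EuclideanSpace ℝ κ} (he : ∀ i, Measurable (e i))
    (h : μ.map (fun ω (p : ι × κ) => e p.1 ω p.2) = Measure.pi fun _ => gaussianReal 0 1) :
    μ.map (fun ω i => e i ω) = Measure.pi fun _ => stdGaussian (EuclideanSpace ℝ κ) := by
  have hcurry : μ.map (fun ω i k => e i ω k) =
      Measure.pi fun _ : ι => Measure.pi fun _ : κ => gaussianReal 0 1 := by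
    have := Measure.infinitePi_map_curry (fun (_ : ι) (_ : κ) => gaussianReal 0 1)
    simp only [Measure.infinitePi_eq_pi] at this
    rw [← this, ← h, Measure.map_map (by fun_prop) (by fun_prop)]
    rfl
  have hpi := Measure.pi_map_pi (μ := fun _ : ι => Measure.pi fun _ : κ => gaussianReal 0 1)
    (f := fun _ => WithLp.toLp 2) fun _ => by fun_prop
  simp only [map_pi_eq_stdGaussian] at hpi
  rw [← hpi, ← hcurry, Measure.map_map (by fun_prop) (by fun_prop)]
  rfl

lemma integral_prodMk_of_indepFun [IsProbabilityMeasure μ] {x : Ω → X} {y : Ω → Y}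
    (hx : Measurable x) (hy : Measurable y) (hxy : IndepFun x y μ) {f : X × Y → ℝ}
    (hf : Measurable f) {a b : ℝ} (hab : ∀ p, f p ∈ Set.Icc a b) :
    ∫ ω, f (x ω, y ω) ∂μ = ∫ ω, ∫ z, f (x ω, z) ∂μ.map y ∂μ := by
  have := Measure.isProbabilityMeasure_map (μ := μ) hx.aemeasurable
  have := Measure.isProbabilityMeasure_map (μ := μ) hy.aemeasurable
  calc ∫ ω, f (x ω, y ω) ∂μ = ∫ p, f p ∂(μ.map x).prod (μ.map y) := by
        rw [← (indepFun_iff_map_prod_eq_prod_map_map hx.aemeasurable hy.aemeasurable).1 hxy,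
          integral_map (by fun_prop) hf.aestronglyMeasurable]
    _ = ∫ w, ∫ z, f (w, z) ∂μ.map y ∂μ.map x :=
        integral_prod _ (.of_mem_Icc a b hf.aemeasurable (.of_forall hab))
    _ = ∫ ω, ∫ z, f (x ω, z) ∂μ.map y ∂μ :=
        integral_map hx.aemeasurable
          hf.stronglyMeasurable.integral_prod_right'.aestronglyMeasurable

lemma integral_apply_of_indepFun_of_uniform [IsProbabilityMeasure μ] {N : ℕ} {J : Ω → Fin N}
    {y : Ω → Y} (hJ : Measurable J) (hy : Measurable y) (hunif : ∀ j, μ (J ⁻¹' {j}) = 1 / N)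
    (hyJ : IndepFun y J μ) {F : Fin N → Y → ℝ} (hF : ∀ i, Measurable (F i)) {a b : ℝ}
    (hab : ∀ i y, F i y ∈ Set.Icc a b) :
    ∫ ω, F (J ω) (y ω) ∂μ = ∫ ω, 1 / N * ∑ i, F i (y ω) ∂μ := by
  have := Measure.isProbabilityMeasure_map (μ := μ) hJ.aemeasurable
  have hmass (i : Fin N) : (μ.map J).real {i} = 1 / N := by
    rw [Measure.real, Measure.map_apply hJ (measurableSet_singleton i), hunif, toReal_div,
      toReal_one, toReal_natCast]
  rw [integral_prodMk_of_indepFun hy hJ hyJ (f := fun p => F p.2 p.1)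
    (measurable_from_prod_countable_left hF) fun p => hab p.2 p.1]
  simp only [integral_fintype .of_finite, hmass, smul_eq_mul, Finset.mul_sum]

end Independence

section Disintegration

variable {Ω C X : Type*} [MeasurableSpace Ω] [mC : MeasurableSpace C] [MeasurableSpace X]
  {μ : Measure Ω} [IsProbabilityMeasure μ] {c : Ω → C} {x : Ω → X} {κ : Kernel C X}
  [IsMarkovKernel κ]

lemma condExp_ae_eq_integral_of_map_eq_compProd [StandardBorelSpace X] [Nonempty X]
    (hc : Measurable c) (hx : Measurable x) (h : μ.map (fun ω => (c ω, x ω)) = μ.map c ⊗ₘ κ)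
    {f : C × X → ℝ} (hf : Measurable f) (hint : Integrable (fun ω => f (c ω, x ω)) μ) :
    μ[fun ω => f (c ω, x ω) | mC.comap c] =ᵐ[μ] fun ω => ∫ y, f (c ω, y) ∂κ (c ω) := by
  have hdistrib := ae_of_ae_map hc.aemeasurable
    (condDistrib_ae_eq_of_measure_eq_compProd c hx.aemeasurable h)
  filter_upwards [condExp_prod_ae_eq_integral_condDistrib hc hx.aemeasurable
    hf.stronglyMeasurable hint, hdistrib] with ω hcond hκ
  rw [hcond, hκ]

end Disintegration

section Symmetrization

open InformationTheory

variable {C X : Type*} [MeasurableSpace C] [MeasurableSpace X] {m : Measure C}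
  [IsProbabilityMeasure m] {φ : C → C} {κ κ' : Kernel C X} [IsMarkovKernel κ] [IsMarkovKernel κ']
  {f : C × X → ℝ} {R : ℝ}

lemma integral_compProd_eq_zero_of_antisymm (hφ : MeasurePreserving φ m m)
    (hκ' : ∀ c, κ' (φ c) = κ' c) (hf : Measurable f) (hanti : ∀ c x, f (φ c, x) = -f (c, x))
    (hint : Integrable f (m ⊗ₘ κ')) :
    ∫ p, f p ∂(m ⊗ₘ κ') = 0 := by
  have hmeas : StronglyMeasurable fun c => ∫ x, f (c, x) ∂κ' c :=
    hf.stronglyMeasurable.integral_kernel_prod_right'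
  have hneg : ∫ c, ∫ x, f (c, x) ∂κ' c ∂m = -∫ c, ∫ x, f (c, x) ∂κ' c ∂m := by
    conv_lhs => rw [← hφ.map_eq]
    rw [integral_map hφ.aemeasurable hmeas.aestronglyMeasurable, ← integral_neg]
    simp only [hκ', hanti, integral_neg]
  rw [Measure.integral_compProd hint]
  linarith

lemma integral_compProd_le_of_antisymm (hφ : MeasurePreserving φ m m)
    (hκ' : ∀ c, κ' (φ c) = κ' c) (hf : Measurable f) (hanti : ∀ c x, f (φ c, x) = -f (c, x))
    (hR : ∀ p, f p ∈ Set.Icc (-R) R) {k : C → ℝ}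
    (hk : ∀ c, klDiv (κ c) (κ' c) ≤ ENNReal.ofReal (k c)) (hk0 : ∀ c, 0 ≤ k c)
    (hkint : Integrable (fun c => √(k c)) m) :
    ∫ p, f p ∂(m ⊗ₘ κ) ≤ ∫ c, R * √(2 * k c) ∂m := by
  have hint (ρ : Kernel C X) [IsMarkovKernel ρ] : Integrable f (m ⊗ₘ ρ) :=
    .of_mem_Icc _ _ hf.aemeasurable (.of_forall hR)
  have hinner (ρ : Kernel C X) [IsMarkovKernel ρ] : Integrable (fun c => ∫ x, f (c, x) ∂ρ c) m :=
    (hint ρ).integral_compProd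
  have hdiff : ∫ p, f p ∂(m ⊗ₘ κ) = ∫ c, (∫ x, f (c, x) ∂κ c - ∫ x, f (c, x) ∂κ' c) ∂m := by
    rw [integral_sub (hinner κ) (hinner κ'),
      ← Measure.integral_compProd (hint κ), ← Measure.integral_compProd (hint κ'),
      integral_compProd_eq_zero_of_antisymm hφ hκ' hf hanti (hint κ'), sub_zero]
  rw [hdiff]
  refine integral_mono ((hinner κ).sub (hinner κ')) ?_ fun c => ?_
  · simp only [Real.sqrt_mul zero_le_two]
    exact (hkint.const_mul _).const_mul _
  obtain ⟨x₀⟩ := (κ c).nonempty_of_neZero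
  have hR0 : 0 ≤ R := by linarith [(hR (c, x₀)).1.trans (hR (c, x₀)).2]
  calc ∫ x, f (c, x) ∂κ c - ∫ x, f (c, x) ∂κ' c
      ≤ (R - -R) * √((klDiv (κ c) (κ' c)).toReal / 2) :=
        integral_sub_integral_le_sqrt_klDiv_of_mem_Icc ((hk c).trans_lt ofReal_lt_top).ne
          (by fun_prop) fun x => hR (c, x)
    _ ≤ (R - -R) * √(k c / 2) := by
        gcongr
        · linarith
        · exact toReal_le_of_le_ofReal (hk0 c) (hk c)
    _ = R * √(2 * k c) := by
        rw [show 2 * k c = 2 ^ 2 * (k c / 2) by ring, Real.sqrt_mul (by positivity),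
          Real.sqrt_sq zero_le_two]
        ring

end Symmetrization

section GaussianChain

open InformationTheory

variable {E : Type*} [NormedAddCommGroup E] [MeasurableSpace E] {T : ℕ}

/-- The trajectory in which only the initial state `x` has been written; later states are `0`
until the recursion overwrites them. -/
def initialPath (x : E) : Fin (T + 1) → E :=
  Function.update 0 0 x

lemma measurable_initialPath : Measurable (initialPath : E → Fin (T + 1) → E) :=
  measurable_update 0

instance (ν : Measure E) [IsProbabilityMeasure ν] :
    IsProbabilityMeasure (ν.map (initialPath (T := T))) :=
  Measure.isProbabilityMeasure_map measurable_initialPath.aemeasurable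

variable {C : Type*} [MeasurableSpace C] [InnerProductSpace ℝ E] [FiniteDimensional ℝ E]
  [BorelSpace E]

/-- One step of a recursion with Gaussian noise, seen on trajectories. -/
noncomputable def gaussianStep (A : C × (Fin (T + 1) → E) → E) (σ : ℝ) (t : Fin T) :
    Kernel (C × (Fin (T + 1) → E)) (Fin (T + 1) → E) :=
  noiseKernel (stdGaussian E) fun p => Function.update p.1.2 t.succ (A p.1 + σ • p.2)

/-- Given `c`, the law at time `j` of the trajectory of
`x_{t+1} = A t (c, (x_0, …, x_t)) + σ t • ε_t` with `x_0 ∼ ν` and i.i.d. standard Gaussian noises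
`ε_t`. -/
noncomputable def gaussianChain (ν : Measure E) (A : Fin T → C × (Fin (T + 1) → E) → E)
    (σ : Fin T → ℝ) (j : Fin (T + 1)) : Kernel C (Fin (T + 1) → E) :=
  chainKernel (Kernel.const C (ν.map initialPath)) (fun t => gaussianStep (A t) (σ t) t) j

variable {ν : Measure E} {A B : Fin T → C × (Fin (T + 1) → E) → E} {σ : Fin T → ℝ}

lemma measurable_update_add_smul {A : C × (Fin (T + 1) → E) → E} (hA : Measurable A) (σ : ℝ)
    (t : Fin T) :
    Measurable fun p : (C × (Fin (T + 1) → E)) × E =>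
      Function.update p.1.2 t.succ (A p.1 + σ • p.2) := by
  have hp : Measurable fun p : (C × (Fin (T + 1) → E)) × E => (p.1.2, A p.1 + σ • p.2) := by
    fun_prop
  exact (measurable_update' (a := t.succ)).comp hp

lemma isMarkovKernel_gaussianStep {A : C × (Fin (T + 1) → E) → E} (hA : Measurable A) (σ : ℝ)
    (t : Fin T) : IsMarkovKernel (gaussianStep A σ t) :=
  isMarkovKernel_noiseKernel (measurable_update_add_smul hA σ t)

lemma isMarkovKernel_gaussianChain [IsProbabilityMeasure ν] (hA : ∀ t, Measurable (A t))
    (j : Fin (T + 1)) : IsMarkovKernel (gaussianChain ν A σ j) := by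
  have := fun t => isMarkovKernel_gaussianStep (hA t) (σ t) t
  rw [gaussianChain]
  infer_instance

lemma sectR_gaussianStep {A : C × (Fin (T + 1) → E) → E} (hA : Measurable A) (σ : ℝ)
    (t : Fin T) (c : C) :
    (gaussianStep A σ t).sectR c = noiseKernel (stdGaussian E) fun p =>
      Function.update p.1 t.succ (A (c, p.1) + σ • p.2) := by
  ext1 x
  rw [Kernel.sectR_apply, gaussianStep, noiseKernel_apply (measurable_update_add_smul hA σ t),
    noiseKernel_apply]
  have hpair : Measurable fun p : (Fin (T + 1) → E) × E => ((c, p.1), p.2) := by fun_prop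
  exact (measurable_update_add_smul hA σ t).comp hpair

lemma gaussianChain_congr [IsProbabilityMeasure ν] (hA : ∀ t, Measurable (A t)) {c c' : C}
    (h : ∀ t x, A t (c, x) = A t (c', x)) (j : Fin (T + 1)) :
    gaussianChain ν A σ j c = gaussianChain ν A σ j c' := by
  have := fun t => isMarkovKernel_gaussianStep (hA t) (σ t) t
  refine chainKernel_congr (κ₀ := Kernel.const C (ν.map initialPath))
    (κ := fun t => gaussianStep (A t) (σ t) t) (c := c) (c' := c') rfl (fun t x => ?_) j
  rw [← Kernel.sectR_apply, ← Kernel.sectR_apply]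
  simp only [sectR_gaussianStep (hA t), h]

lemma klDiv_gaussianChain_le [IsProbabilityMeasure ν] (hA : ∀ t, Measurable (A t))
    (hB : ∀ t, Measurable (B t)) (hσ : ∀ t, σ t ≠ 0) (c : C)
    (hAB : ∀ t, Integrable (fun x => ‖A t (c, x) - B t (c, x)‖ ^ 2)
      (gaussianChain ν A σ t.castSucc c)) :
    klDiv (gaussianChain ν A σ (Fin.last T) c) (gaussianChain ν B σ (Fin.last T) c) ≤
      ENNReal.ofReal (∑ t, ∫ x, ‖A t (c, x) - B t (c, x)‖ ^ 2 / (2 * σ t ^ 2)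
        ∂gaussianChain ν A σ t.castSucc c) := by
  have hstepA := fun t => isMarkovKernel_gaussianStep (hA t) (σ t) t
  have hstepB := fun t => isMarkovKernel_gaussianStep (hB t) (σ t) t
  have := isMarkovKernel_gaussianChain (C := C) (ν := ν) (σ := σ) hA
  rw [ENNReal.ofReal_sum_of_nonneg fun t _ => integral_nonneg fun x => by positivity]
  refine (klDiv_chainKernel_le (κ := fun t => gaussianStep (A t) (σ t) t)
    (η := fun t => gaussianStep (B t) (σ t) t) c (Fin.last T)).trans ?_
  simp only [Fin.castSucc_lt_last, Finset.filter_true]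
  gcongr with t
  rw [sectR_gaussianStep (hA t), sectR_gaussianStep (hB t)]
  exact klDiv_compProd_noiseKernel_stdGaussian_le (A := fun x => A t (c, x))
    (B := fun x => B t (c, x))
    (g := fun p : (Fin (T + 1) → E) × E => Function.update p.1 t.succ p.2)
    (by fun_prop) (by fun_prop) (hAB t) (hσ t) measurable_update'

end GaussianChain

section PathLaw

variable {E : Type*} [NormedAddCommGroup E] {T : ℕ}

/-- The trajectory `x` as recorded at time `j`: the states after `j` are still `0`. -/
def pathUpTo (x : ℕ → E) (j : Fin (T + 1)) : Fin (T + 1) → E :=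
  fun k => if k ≤ j then x k else 0

lemma pathUpTo_zero (x : ℕ → E) : pathUpTo x (0 : Fin (T + 1)) = initialPath (x 0) := by
  ext k
  rcases eq_or_ne k 0 with rfl | hk
  · simp [pathUpTo, initialPath]
  · simp [pathUpTo, initialPath, hk]

lemma pathUpTo_succ (x : ℕ → E) (t : Fin T) :
    pathUpTo x t.succ = Function.update (pathUpTo x t.castSucc) t.succ (x (t + 1)) := by
  ext k
  rcases eq_or_ne k t.succ with rfl | hk
  · simp [pathUpTo]
  · have hle : k ≤ t.succ ↔ k ≤ t.castSucc := by
      rw [le_iff_lt_or_eq, or_iff_left hk, ← Fin.le_castSucc_iff]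
    simp only [pathUpTo, hle, Function.update_of_ne hk]

lemma pathUpTo_apply_of_le {x : ℕ → E} {j k : Fin (T + 1)} (hk : k ≤ j) :
    pathUpTo x j k = x k :=
  if_pos hk

lemma pathUpTo_last {Ω : Type*} (x : ℕ → Ω → E) :
    (fun ω => pathUpTo (fun n => x n ω) (Fin.last T) (Fin.last T)) = x T :=
  funext fun _ => pathUpTo_apply_of_le le_rfl

variable [InnerProductSpace ℝ E] [FiniteDimensional ℝ E] [MeasurableSpace E] [BorelSpace E]
  {Ω C : Type*} [MeasurableSpace C] {A : Fin T → C × (Fin (T + 1) → E) → E} {σ : Fin T → ℝ}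
  {c : Ω → C} {x : ℕ → Ω → E} {e : Fin T → Ω → E}

lemma measurable_pathUpTo_of_recursion [mΩ : MeasurableSpace Ω] (hA : ∀ t, Measurable (A t))
    (hc : Measurable c) (hx₀ : Measurable (x 0))
    (hrec : ∀ (t : Fin T) ω,
      x (t + 1) ω = A t (c ω, pathUpTo (fun n => x n ω) t.castSucc) + σ t • e t ω)
    (j : Fin (T + 1)) (he : ∀ t : Fin T, t.castSucc < j → Measurable (e t)) :
    Measurable fun ω => pathUpTo (fun n => x n ω) j := by
  induction j using Fin.induction with
  | zero =>
    simp only [pathUpTo_zero]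
    exact measurable_initialPath.comp hx₀
  | succ t ih =>
    have hpast := ih fun s hs => he s (hs.trans t.castSucc_lt_succ)
    have het := he t t.castSucc_lt_succ
    simp only [pathUpTo_succ, hrec]
    exact (measurable_update_add_smul (hA t) (σ t) t).comp ((hc.prodMk hpast).prodMk het)

lemma map_prodMk_pathUpTo [MeasurableSpace Ω] {μ : Measure Ω} [IsProbabilityMeasure μ]
    (hA : ∀ t, Measurable (A t)) (hc : Measurable c) (hx₀ : Measurable (x 0))
    (he : ∀ t, Measurable (e t))
    (hrec : ∀ (t : Fin T) ω,
      x (t + 1) ω = A t (c ω, pathUpTo (fun n => x n ω) t.castSucc) + σ t • e t ω)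
    (hcx₀ : IndepFun c (x 0) μ) (hce : IndepFun (fun ω => (c ω, x 0 ω)) (fun ω t => e t ω) μ)
    (hlaw : μ.map (fun ω t => e t ω) = Measure.pi fun _ => stdGaussian E) (j : Fin (T + 1)) :
    μ.map (fun ω => (c ω, pathUpTo (fun n => x n ω) j)) =
      μ.map c ⊗ₘ gaussianChain (μ.map (x 0)) A σ j := by
  have hmarg := map_eq_of_map_eq_pi he hlaw
  have hiid : iIndepFun e μ := by
    rw [iIndepFun_iff_map_fun_eq_pi_map fun t => (he t).aemeasurable, hlaw]
    simp only [hmarg]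
  have hpath (j : Fin (T + 1)) : Measurable fun ω => pathUpTo (fun n => x n ω) j :=
    measurable_pathUpTo_of_recursion hA hc hx₀ hrec j fun t _ => he t
  have hindep (t : Fin T) :
      IndepFun (fun ω => (c ω, pathUpTo (fun n => x n ω) t.castSucc)) (e t) μ := by
    refine indepFun_of_measurable_comap (indepFun_prodMk_past (hc.prodMk hx₀) he hiid hce t) ?_
    let past : Ω → (C × E) × (Set.Iio t → E) := fun ω => ((c ω, x 0 ω), fun s => e s ω)
    let := MeasurableSpace.comap past inferInstance
    have hpast : Measurable past := comap_measurable past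
    refine hpast.fst.fst.prodMk (measurable_pathUpTo_of_recursion hA hpast.fst.fst hpast.fst.snd
      hrec _ fun s hs => ?_)
    exact (measurable_pi_apply (⟨s, hs⟩ : Set.Iio t)).comp hpast.snd
  have := Measure.isProbabilityMeasure_map (μ := μ) hx₀.aemeasurable
  refine map_prodMk_eq_compProd_chainKernel hc hpath ?_ (fun t => ?_) j
  · simp only [pathUpTo_zero]
    rw [Measure.compProd_const, Measure.map_map measurable_initialPath hx₀]
    exact (indepFun_iff_map_prod_eq_prod_map_map hc.aemeasurable
      (measurable_initialPath.comp hx₀).aemeasurable).1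
      (hcx₀.comp measurable_id measurable_initialPath)
  · have := map_prodMk_eq_compProd_noiseKernel (hc.prodMk (hpath t.castSucc)) (he t) (hindep t)
      (measurable_update_add_smul (hA t) (σ t) t)
    rw [hmarg] at this
    simpa only [pathUpTo_succ, hrec, gaussianStep] using this

end PathLaw

section Supersample

variable {N : ℕ} {𝒵 : Type*} [MeasurableSpace 𝒵]

/-- The training sample `S` selected from the super-sample `s` by the bits `u`. -/
def trainSample (s : Fin (2 * N) → 𝒵) (u : Fin N → Bool) (i : Fin N) : 𝒵 :=
  s (subIdx N i (u i))

/-- The points of the super-sample `s` which the bits `u` leave out of the training sample. -/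
def ghostSample (s : Fin (2 * N) → 𝒵) (u : Fin N → Bool) (i : Fin N) : 𝒵 :=
  s (subIdx N i (!u i))

lemma subIdx_injective : Function.Injective2 (subIdx N) := by
  intro i j u v h
  have hval := congrArg Fin.val h
  have hi := i.isLt
  have hj := j.isLt
  cases u <;> cases v <;> simp [subIdx, Fin.ext_iff] at hval ⊢ <;> omega

lemma measurable_trainSample_apply (i : Fin N) :
    Measurable fun p : (Fin (2 * N) → 𝒵) × (Fin N → Bool) => trainSample p.1 p.2 i :=
  measurable_from_prod_countable_left fun u => measurable_pi_apply (subIdx N i (u i))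

lemma measurable_ghostSample_apply (i : Fin N) :
    Measurable fun p : (Fin (2 * N) → 𝒵) × (Fin N → Bool) => ghostSample p.1 p.2 i :=
  measurable_from_prod_countable_left fun u => measurable_pi_apply (subIdx N i (!u i))

lemma measurePreserving_pi_comp_of_injective {ι κ : Type*} [Fintype ι] [Fintype κ]
    (P : Measure 𝒵) [IsProbabilityMeasure P] {e : ι → κ} (he : Function.Injective e) :
    MeasurePreserving (fun (s : κ → 𝒵) i => s (e i)) (Measure.pi fun _ => P)
      (Measure.pi fun _ => P) where
  measurable := by fun_prop
  map_eq := by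
    have hindep := (iIndepFun_pi (μ := fun _ : κ => P) (X := fun _ z => z)
      fun _ => aemeasurable_id).precomp he
    have hpi := (iIndepFun_iff_map_fun_eq_pi_map
      fun i => (measurable_pi_apply (e i)).aemeasurable).1 hindep
    have hmarg (k : κ) : (Measure.pi fun _ : κ => P).map (fun s => s k) = P :=
      (measurePreserving_eval (fun _ : κ => P) k).map_eq
    simp only [hmarg] at hpi
    exact hpi

lemma measurePreserving_trainSample_ghostSample (P : Measure 𝒵) [IsProbabilityMeasure P]
    (ν : Measure (Fin N → Bool)) [IsProbabilityMeasure ν] :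
    MeasurePreserving (fun p : (Fin (2 * N) → 𝒵) × (Fin N → Bool) =>
        (trainSample p.1 p.2, ghostSample p.1 p.2))
      ((Measure.pi fun _ => P).prod ν) ((Measure.pi fun _ => P).prod (Measure.pi fun _ => P)) := by
  let e (u : Fin N → Bool) : Fin N ⊕ Fin N → Fin (2 * N) :=
    Sum.elim (fun i => subIdx N i (u i)) fun i => subIdx N i (!u i)
  have he (u : Fin N → Bool) : Function.Injective (e u) := by
    rintro (i | i) (j | j) hij <;> obtain ⟨rfl, h⟩ := subIdx_injective hij <;> simp at h ⊢
  have hmeas : Measurable fun p : (Fin N → Bool) × (Fin (2 * N) → 𝒵) =>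
      fun i => p.2 (e p.1 i) :=
    measurable_from_prod_countable_right fun u =>
      measurable_pi_lambda _ fun i => measurable_pi_apply (e u i)
  have hskew := (MeasurePreserving.id ν).skew_product hmeas
    (.of_forall fun u => (measurePreserving_pi_comp_of_injective P (he u)).map_eq)
  exact (measurePreserving_sumPiEquivProdPi fun _ => P).comp
    (measurePreserving_snd.comp (hskew.comp Measure.measurePreserving_swap))

instance : IsProbabilityMeasure bern :=
  PMF.toMeasure.isProbabilityMeasure _

lemma measurePreserving_not : MeasurePreserving not bern bern where
  measurable := by fun_prop
  map_eq := by
    refine Measure.ext_of_singleton fun b => ?_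
    have hpre : not ⁻¹' {b} = {!b} := by
      ext x
      cases x <;> cases b <;> simp
    simp only [Measure.map_apply (measurable_of_countable _) (measurableSet_singleton b), hpre,
      bern, PMF.toMeasure_apply_singleton _ _ (measurableSet_singleton _)]
    have hhalf : (1 - 1 / 2 : NNReal) = 1 / 2 := tsub_eq_of_eq_add (add_halves 1).symm
    cases b
    exacts [congrArg ofNNReal hhalf.symm, congrArg ofNNReal hhalf]

lemma measurePreserving_update_not (i : Fin N) :
    MeasurePreserving (fun u : Fin N → Bool => Function.update u i (!u i))
      (Measure.pi fun _ => bern) (Measure.pi fun _ => bern) := by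
  have hcoord (j : Fin N) :
      MeasurePreserving (if j = i then not else id) bern bern := by
    split_ifs
    exacts [measurePreserving_not, .id bern]
  convert measurePreserving_pi _ _ hcoord using 1
  ext u j
  rcases eq_or_ne j i with rfl | hj
  · simp
  · simp [hj]

end Supersample

section Conditioning

variable {N T : ℕ} {𝒵 : Type*}

/-- The values of `(((J, U), S̃), V^T)`, the variables on which `E_t` conditions. -/
abbrev Conditioning (N T : ℕ) (𝒵 : Type*) : Type _ :=
  ((Fin N × (Fin N → Bool)) × (Fin (2 * N) → 𝒵)) × (Fin T → Finset (Fin N))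

namespace Conditioning

/-- The index `J`. -/
def index (c : Conditioning N T 𝒵) : Fin N := c.1.1.1

/-- The selection bits `U`. -/
def bits (c : Conditioning N T 𝒵) : Fin N → Bool := c.1.1.2

/-- The super-sample `S̃`. -/
def supersample (c : Conditioning N T 𝒵) : Fin (2 * N) → 𝒵 := c.1.2

/-- The batches `V^T`. -/
def batch (c : Conditioning N T 𝒵) : Fin T → Finset (Fin N) := c.2

/-- The bit `U_J` as a real number. -/
def bit (c : Conditioning N T 𝒵) : ℝ := if c.bits c.index then 1 else 0

/-- The training sample selected by the bits. -/
def train (c : Conditioning N T 𝒵) : Fin N → 𝒵 := trainSample c.supersample c.bits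

/-- The complement of the training sample in the super-sample. -/
def ghost (c : Conditioning N T 𝒵) : Fin N → 𝒵 := ghostSample c.supersample c.bits

/-- The involution that negates the bit `U_J`. -/
def flip (c : Conditioning N T 𝒵) : Conditioning N T 𝒵 :=
  (((c.index, Function.update c.bits c.index (!c.bits c.index)), c.supersample), c.batch)

lemma train_flip_of_ne (c : Conditioning N T 𝒵) {i : Fin N} (hi : i ≠ c.index) :
    c.flip.train i = c.train i :=
  congrArg (fun u => c.supersample (subIdx N i u)) (Function.update_of_ne hi _ _)

lemma train_flip_index (c : Conditioning N T 𝒵) : c.flip.train c.index = c.ghost c.index := by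
  simp [train, ghost, trainSample, ghostSample, flip, bits, supersample, index]

lemma ghost_flip_index (c : Conditioning N T 𝒵) : c.flip.ghost c.index = c.train c.index := by
  simp [train, ghost, trainSample, ghostSample, flip, bits, supersample, index]

variable [MeasurableSpace 𝒵]

lemma measurable_index : Measurable (index : Conditioning N T 𝒵 → Fin N) := by
  unfold index; fun_prop

lemma measurable_bits : Measurable (bits : Conditioning N T 𝒵 → Fin N → Bool) := by
  unfold bits; fun_prop

lemma measurable_supersample :
    Measurable (supersample : Conditioning N T 𝒵 → Fin (2 * N) → 𝒵) := by
  unfold supersample; fun_prop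

lemma measurable_batch : Measurable (batch : Conditioning N T 𝒵 → Fin T → Finset (Fin N)) := by
  unfold batch; fun_prop

lemma measurable_train : Measurable (train : Conditioning N T 𝒵 → Fin N → 𝒵) :=
  measurable_pi_lambda _ fun i => (measurable_trainSample_apply i).comp
    (measurable_supersample.prodMk measurable_bits)

lemma measurable_ghost : Measurable (ghost : Conditioning N T 𝒵 → Fin N → 𝒵) :=
  measurable_pi_lambda _ fun i => (measurable_ghostSample_apply i).comp
    (measurable_supersample.prodMk measurable_bits)

lemma measurable_bit : Measurable (bit : Conditioning N T 𝒵 → ℝ) :=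
  (measurable_of_countable fun q : Fin N × (Fin N → Bool) => if q.2 q.1 then (1 : ℝ) else 0).comp
    (measurable_index.prodMk measurable_bits)

lemma measurable_train_index : Measurable fun c : Conditioning N T 𝒵 => c.train c.index :=
  (measurable_from_prod_countable_left (f := fun p : (Fin N → 𝒵) × Fin N => p.1 p.2)
    measurable_pi_apply).comp (measurable_train.prodMk measurable_index)

lemma measurable_ghost_index : Measurable fun c : Conditioning N T 𝒵 => c.ghost c.index :=
  (measurable_from_prod_countable_left (f := fun p : (Fin N → 𝒵) × Fin N => p.1 p.2)
    measurable_pi_apply).comp (measurable_ghost.prodMk measurable_index)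

lemma measurable_loss_ghost_sub_loss_train {E : Type*} [MeasurableSpace E]
    {loss : E → 𝒵 → ℝ} (hloss : Measurable fun p : E × 𝒵 => loss p.1 p.2) :
    Measurable fun p : Conditioning N T 𝒵 × (Fin (T + 1) → E) =>
      loss (p.2 (Fin.last T)) (p.1.ghost p.1.index) -
        loss (p.2 (Fin.last T)) (p.1.train p.1.index) := by
  have hx : Measurable fun p : Conditioning N T 𝒵 × (Fin (T + 1) → E) => p.2 (Fin.last T) := by
    fun_prop
  exact (hloss.comp (hx.prodMk (measurable_ghost_index.comp measurable_fst))).sub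
    (hloss.comp (hx.prodMk (measurable_train_index.comp measurable_fst)))

lemma measurePreserving_flip (ρ : Measure (Fin N)) [IsProbabilityMeasure ρ]
    (P : Measure (Fin (2 * N) → 𝒵)) [IsProbabilityMeasure P]
    (ν : Measure (Fin T → Finset (Fin N))) [IsProbabilityMeasure ν] :
    MeasurePreserving (flip : Conditioning N T 𝒵 → Conditioning N T 𝒵)
      (((ρ.prod (Measure.pi fun _ => bern)).prod P).prod ν)
      (((ρ.prod (Measure.pi fun _ => bern)).prod P).prod ν) :=
  (((MeasurePreserving.id ρ).skew_product (g := fun j u => Function.update u j (!u j))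
    (measurable_of_countable _) (.of_forall fun j => (measurePreserving_update_not j).map_eq)).prod
      (.id P)).prod (.id ν)

end Conditioning

end Conditioning

section SGDStep

variable {E : Type*} [NormedAddCommGroup E] [NormedSpace ℝ E] {N : ℕ}

/-- One noiseless step from `x` along the gradients `g i` of the batch `B`; the step size `r`
already carries the factor `1 / |B|`. -/
def sgdStep (r : ℝ) (B : Finset (Fin N)) (g : Fin N → E) (x : E) : E :=
  x - r • ∑ i ∈ B, g i

lemma norm_sgdStep_sub_sgdStep_update (r : ℝ) (B : Finset (Fin N)) (g : Fin N → E) (j : Fin N)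
    (h x : E) :
    ‖sgdStep r B g x - sgdStep r B (Function.update g j h) x‖ =
      if j ∈ B then |r| * ‖g j - h‖ else 0 := by
  rw [sgdStep, sgdStep, sub_sub_sub_cancel_left _ _ x, ← smul_sub, norm_smul, Real.norm_eq_abs]
  split_ifs with hj
  · rw [Finset.sum_update_of_mem hj, ← Finset.add_sum_erase B g hj, Finset.sdiff_singleton_eq_erase,
      add_sub_add_right_eq_sub, norm_sub_rev]
  · rw [Finset.sum_update_of_notMem hj, sub_self, norm_zero, mul_zero]

lemma measurable_sgdStep [MeasurableSpace E] [BorelSpace E] [SecondCountableTopology E] (r : ℝ) :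
    Measurable fun p : (Finset (Fin N) × (Fin N → E)) × E => sgdStep r p.1.1 p.1.2 p.2 := by
  have hsum : Measurable fun p : (Finset (Fin N)) × (Fin N → E) => ∑ i ∈ p.1, p.2 i :=
    measurable_from_prod_countable_right fun B =>
      Finset.measurable_sum B fun i _ => measurable_pi_apply i
  unfold sgdStep
  fun_prop

end SGDStep

section BitEstimator

variable {E : Type*} {N T : ℕ} {𝒵 : Type*}

lemma Conditioning.bit_sub_sq_mem_Icc (c : Conditioning N T 𝒵) {p : ℝ}
    (hp : p ∈ Set.Icc (0 : ℝ) 1) : (c.bit - p) ^ 2 ∈ Set.Icc (0 : ℝ) 1 := by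
  obtain ⟨hp₀, hp₁⟩ := hp
  refine ⟨sq_nonneg _, (sq_le_one_iff_abs_le_one _).2 (abs_le.2 ?_)⟩
  unfold Conditioning.bit
  split_ifs <;> constructor <;> linarith

variable [MeasurableSpace 𝒵] [MeasurableSpace E]

/-- The functions of a `Conditioning` and a trajectory that may serve as estimates of `U_J`: they
are `[0, 1]`-valued and do not see `U_J` itself. -/
structure IsBitEstimator (p : Conditioning N T 𝒵 × (Fin (T + 1) → E) → ℝ) : Prop where
  measurable : Measurable p
  mem_Icc : ∀ q, p q ∈ Set.Icc (0 : ℝ) 1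
  flip : ∀ c x, p (c.flip, x) = p (c, x)

lemma IsBitEstimator.integrable_bit_sub_sq {p : Conditioning N T 𝒵 × (Fin (T + 1) → E) → ℝ}
    (hp : IsBitEstimator p) (c : Conditioning N T 𝒵) (ρ : Measure (Fin (T + 1) → E))
    [IsFiniteMeasure ρ] : Integrable (fun x => (c.bit - p (c, x)) ^ 2) ρ :=
  .of_mem_Icc 0 1 (by have := hp.measurable; fun_prop)
    (.of_forall fun x => c.bit_sub_sq_mem_Icc (hp.mem_Icc (c, x)))

end BitEstimator

section Drift

variable {E : Type*} [NormedAddCommGroup E] [NormedSpace ℝ E] {N T : ℕ} {𝒵 : Type*}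

/-- The drift of step `t` of SGLD with gradient `G` and effective step sizes `r`, as a function of
the training sample, the batches and the trajectory. -/
def sgldDrift (G : E → 𝒵 → E) (r : Fin T → ℝ) (t : Fin T)
    (p : ((Fin N → 𝒵) × (Fin T → Finset (Fin N))) × (Fin (T + 1) → E)) : E :=
  sgdStep (r t) (p.1.2 t) (fun i => G (p.2 t.castSucc) (p.1.1 i)) (p.2 t.castSucc)

/-- The SGLD drift on the training sample of a `Conditioning`. -/
def posteriorDrift (G : E → 𝒵 → E) (r : Fin T → ℝ) (t : Fin T)
    (p : Conditioning N T 𝒵 × (Fin (T + 1) → E)) : E :=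
  sgldDrift G r t ((p.1.train, p.1.batch), p.2)

/-- The drift of the prior chain, which does not see `U_J`: the gradient at `Z_J` is replaced by
the mixture of the gradients at `Z̃_J` and `Z̃_{J+N}` with estimated weights `1 - P` and `P`. -/
noncomputable def priorDrift (G : E → 𝒵 → E) (r : Fin T → ℝ)
    (P : Fin T → Conditioning N T 𝒵 × (Fin (T + 1) → E) → ℝ) (t : Fin T)
    (p : Conditioning N T 𝒵 × (Fin (T + 1) → E)) : E :=
  sgdStep (r t) (p.1.batch t)
    (Function.update (fun i => G (p.2 t.castSucc) (p.1.train i)) p.1.index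
      (AffineMap.lineMap (G (p.2 t.castSucc) (p.1.supersample (subIdx N p.1.index false)))
        (G (p.2 t.castSucc) (p.1.supersample (subIdx N p.1.index true))) (P t p)))
    (p.2 t.castSucc)

variable {G : E → 𝒵 → E} {r : Fin T → ℝ}
  {P : Fin T → Conditioning N T 𝒵 × (Fin (T + 1) → E) → ℝ}

lemma Conditioning.lineMap_bit (c : Conditioning N T 𝒵) (g : 𝒵 → E) :
    AffineMap.lineMap (g (c.supersample (subIdx N c.index false)))
      (g (c.supersample (subIdx N c.index true))) c.bit = g (c.train c.index) := by
  unfold Conditioning.bit Conditioning.train trainSample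
  cases c.bits c.index <;> simp

lemma norm_posteriorDrift_sub_priorDrift_le {L : ℝ} (hL : ∀ x z, ‖G x z‖ ≤ L) (t : Fin T)
    (p : Conditioning N T 𝒵 × (Fin (T + 1) → E)) :
    ‖posteriorDrift G r t p - priorDrift G r P t p‖ ≤
      if p.1.index ∈ p.1.batch t then 2 * L * |r t| * |p.1.bit - P t p| else 0 := by
  rw [posteriorDrift, sgldDrift, priorDrift, norm_sgdStep_sub_sgdStep_update,
    ← p.1.lineMap_bit (G (p.2 t.castSucc)), ← dist_eq_norm, dist_lineMap_lineMap, Real.dist_eq,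
    dist_eq_norm]
  split_ifs
  · have hdiff (z z' : 𝒵) : ‖G (p.2 t.castSucc) z - G (p.2 t.castSucc) z'‖ ≤ 2 * L :=
      (norm_sub_le_of_le (hL _ z) (hL _ z')).trans_eq (two_mul L).symm
    calc |r t| * (|p.1.bit - P t p| * _) ≤ |r t| * (|p.1.bit - P t p| * (2 * L)) := by
          gcongr
          exact hdiff _ _
      _ = 2 * L * |r t| * |p.1.bit - P t p| := by ring
  · rfl

lemma norm_sq_posteriorDrift_sub_priorDrift_le {L : ℝ} (hL : ∀ x z, ‖G x z‖ ≤ L) (t : Fin T)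
    (p : Conditioning N T 𝒵 × (Fin (T + 1) → E)) :
    ‖posteriorDrift G r t p - priorDrift G r P t p‖ ^ 2 ≤
      if p.1.index ∈ p.1.batch t then (2 * L * r t) ^ 2 * (p.1.bit - P t p) ^ 2 else 0 := by
  refine (pow_le_pow_left₀ (norm_nonneg _)
    (norm_posteriorDrift_sub_priorDrift_le hL t p) 2).trans_eq ?_
  split_ifs
  · simp only [mul_pow, sq_abs]
  · exact zero_pow two_ne_zero

variable [MeasurableSpace E] [MeasurableSpace 𝒵]

lemma priorDrift_flip (hP : ∀ t, IsBitEstimator (P t)) (t : Fin T) (c : Conditioning N T 𝒵)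
    (x : Fin (T + 1) → E) : priorDrift G r P t (c.flip, x) = priorDrift G r P t (c, x) := by
  have hupdate (y : E) :
      Function.update (fun i => G (x t.castSucc) (c.flip.train i)) c.index y =
        Function.update (fun i => G (x t.castSucc) (c.train i)) c.index y := by
    ext i
    rcases eq_or_ne i c.index with rfl | hi
    · rw [Function.update_self, Function.update_self]
    · rw [Function.update_of_ne hi, Function.update_of_ne hi, c.train_flip_of_ne hi]
  unfold priorDrift
  rw [(hP t).flip]
  exact congrArg (sgdStep (r t) (c.batch t) · (x t.castSucc)) (hupdate _)

variable [BorelSpace E] [SecondCountableTopology E]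

lemma measurable_sgldDrift (hG : Measurable fun p : E × 𝒵 => G p.1 p.2) (t : Fin T) :
    Measurable (sgldDrift (N := N) G r t) := by
  have hgrad : Measurable fun p : ((Fin N → 𝒵) × (Fin T → Finset (Fin N))) × (Fin (T + 1) → E) =>
      fun i => G (p.2 t.castSucc) (p.1.1 i) :=
    measurable_pi_lambda _ fun i => hG.comp (by fun_prop : Measurable
      fun p : ((Fin N → 𝒵) × (Fin T → Finset (Fin N))) × (Fin (T + 1) → E) =>
        (p.2 t.castSucc, p.1.1 i))
  exact (measurable_sgdStep (r t)).comp
    ((((measurable_pi_apply t).comp measurable_fst.snd).prodMk hgrad).prodMk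
      ((measurable_pi_apply t.castSucc).comp measurable_snd))

lemma measurable_posteriorDrift (hG : Measurable fun p : E × 𝒵 => G p.1 p.2) (t : Fin T) :
    Measurable (posteriorDrift (N := N) G r t) :=
  (measurable_sgldDrift hG t).comp
    (((Conditioning.measurable_train.prodMk Conditioning.measurable_batch).comp
      measurable_fst).prodMk measurable_snd)

lemma measurable_priorDrift (hG : Measurable fun p : E × 𝒵 => G p.1 p.2)
    (hP : ∀ t, IsBitEstimator (P t)) (t : Fin T) : Measurable (priorDrift G r P t) := by
  have hx : Measurable fun p : Conditioning N T 𝒵 × (Fin (T + 1) → E) => p.2 t.castSucc := by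
    fun_prop
  have hgrad : Measurable fun p : Conditioning N T 𝒵 × (Fin (T + 1) → E) =>
      fun i => G (p.2 t.castSucc) (p.1.train i) :=
    measurable_pi_lambda _ fun i => hG.comp <| hx.prodMk <|
      (measurable_pi_apply i).comp (Conditioning.measurable_train.comp measurable_fst)
  have hpoint (u : Bool) : Measurable fun p : Conditioning N T 𝒵 × (Fin (T + 1) → E) =>
      G (p.2 t.castSucc) (p.1.supersample (subIdx N p.1.index u)) := by
    have heval : Measurable fun q : (Fin (2 * N) → 𝒵) × Fin N => q.1 (subIdx N q.2 u) :=
      measurable_from_prod_countable_left fun i => measurable_pi_apply (subIdx N i u)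
    exact hG.comp <| hx.prodMk <| heval.comp <|
      (Conditioning.measurable_supersample.prodMk Conditioning.measurable_index).comp measurable_fst
  have hmix : Measurable fun p => AffineMap.lineMap (k := ℝ)
      (G (p.2 t.castSucc) (p.1.supersample (subIdx N p.1.index false)))
      (G (p.2 t.castSucc) (p.1.supersample (subIdx N p.1.index true))) (P t p) := by
    simp only [AffineMap.lineMap_apply_module']
    exact ((hP t).measurable.smul ((hpoint true).sub (hpoint false))).add (hpoint false)
  have hupdate : Measurable fun q : ((Fin N → E) × E) × Fin N => Function.update q.1.1 q.2 q.1.2 :=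
    measurable_from_prod_countable_left fun j => measurable_update'
  have hbatch : Measurable fun p : Conditioning N T 𝒵 × (Fin (T + 1) → E) => p.1.batch t :=
    (measurable_pi_apply t).comp (Conditioning.measurable_batch.comp measurable_fst)
  exact (measurable_sgdStep (r t)).comp <| (hbatch.prodMk <| hupdate.comp <|
    (hgrad.prodMk hmix).prodMk (Conditioning.measurable_index.comp measurable_fst)).prodMk hx

end Drift

section PosteriorKernel

open InformationTheory

variable {E : Type*} [NormedAddCommGroup E] [InnerProductSpace ℝ E] [FiniteDimensional ℝ E]
  [MeasurableSpace E] [BorelSpace E] {N T : ℕ} {𝒵 : Type*} [MeasurableSpace 𝒵]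

/-- The law of the SGLD trajectory up to time `j` given `(J, U, S̃, V^T)`, for initial law `ν`. -/
noncomputable def posteriorKernel (ν : Measure E) (G : E → 𝒵 → E) (r σ : Fin T → ℝ)
    (j : Fin (T + 1)) : Kernel (Conditioning N T 𝒵) (Fin (T + 1) → E) :=
  gaussianChain ν (posteriorDrift G r) σ j

/-- The weighted squared error `Σ_{t ∈ 𝒯_J(V^T)} E_t[(r_t² / σ_t²) (U_J - P_t)²]` of the estimates
`P` of `U_J`. -/
noncomputable def estimationError (ν : Measure E) (G : E → 𝒵 → E) (r σ : Fin T → ℝ)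
    (P : Fin T → Conditioning N T 𝒵 × (Fin (T + 1) → E) → ℝ) (c : Conditioning N T 𝒵) : ℝ :=
  ∑ t, if c.index ∈ c.batch t then
    ∫ x, r t ^ 2 / σ t ^ 2 * (c.bit - P t (c, x)) ^ 2 ∂posteriorKernel ν G r σ t.castSucc c else 0

variable {ν : Measure E} [IsProbabilityMeasure ν] {G : E → 𝒵 → E} {r σ : Fin T → ℝ}
  {P : Fin T → Conditioning N T 𝒵 × (Fin (T + 1) → E) → ℝ}

lemma isMarkovKernel_posteriorKernel (hG : Measurable fun p : E × 𝒵 => G p.1 p.2)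
    (j : Fin (T + 1)) : IsMarkovKernel (posteriorKernel (N := N) ν G r σ j) :=
  isMarkovKernel_gaussianChain (measurable_posteriorDrift hG) j

lemma measurable_estimationError (hG : Measurable fun p : E × 𝒵 => G p.1 p.2)
    (hP : ∀ t, IsBitEstimator (P t)) : Measurable (estimationError ν G r σ P) := by
  have := isMarkovKernel_posteriorKernel (N := N) (ν := ν) (r := r) (σ := σ) hG
  refine Finset.measurable_sum _ fun t _ => Measurable.ite ?_ ?_ measurable_const
  · have hmem : MeasurableSet {q : Fin N × (Fin T → Finset (Fin N)) | q.1 ∈ q.2 t} :=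
      .of_discrete
    exact (Conditioning.measurable_index.prodMk Conditioning.measurable_batch) hmem
  · have herr : Measurable fun q : Conditioning N T 𝒵 × (Fin (T + 1) → E) =>
        r t ^ 2 / σ t ^ 2 * (q.1.bit - P t q) ^ 2 :=
      (((Conditioning.measurable_bit.comp measurable_fst).sub
        (hP t).measurable).pow_const 2).const_mul _
    exact herr.stronglyMeasurable.integral_kernel_prod_right'.measurable

lemma estimationError_mem_Icc (hG : Measurable fun p : E × 𝒵 => G p.1 p.2)
    (hP : ∀ t, IsBitEstimator (P t)) (c : Conditioning N T 𝒵) :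
    estimationError ν G r σ P c ∈ Set.Icc 0 (∑ t, r t ^ 2 / σ t ^ 2) := by
  have := isMarkovKernel_posteriorKernel (N := N) (ν := ν) (r := r) (σ := σ) hG
  have hterm (t : Fin T) : ∫ x, r t ^ 2 / σ t ^ 2 * (c.bit - P t (c, x)) ^ 2
      ∂posteriorKernel ν G r σ t.castSucc c ∈ Set.Icc 0 (r t ^ 2 / σ t ^ 2) := by
    have hbit x := c.bit_sub_sq_mem_Icc ((hP t).mem_Icc (c, x))
    have hw : 0 ≤ r t ^ 2 / σ t ^ 2 := by positivity
    refine ⟨integral_nonneg fun x => mul_nonneg hw (hbit x).1, ?_⟩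
    refine (integral_mono_of_nonneg (.of_forall fun x => mul_nonneg hw (hbit x).1)
      (integrable_const (r t ^ 2 / σ t ^ 2))
      (.of_forall fun x => mul_le_of_le_one_right hw (hbit x).2)).trans_eq ?_
    rw [integral_const, probReal_univ, one_smul]
  refine ⟨Finset.sum_nonneg fun t _ => ?_, Finset.sum_le_sum fun t _ => ?_⟩ <;> split_ifs
  exacts [(hterm t).1, le_rfl, (hterm t).2, by positivity]

lemma klDiv_posteriorKernel_le (hG : Measurable fun p : E × 𝒵 => G p.1 p.2) {L : ℝ}
    (hL : ∀ x z, ‖G x z‖ ≤ L) (hσ : ∀ t, σ t ≠ 0) (hP : ∀ t, IsBitEstimator (P t))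
    (c : Conditioning N T 𝒵) :
    klDiv (posteriorKernel ν G r σ (Fin.last T) c)
        (gaussianChain ν (priorDrift G r P) σ (Fin.last T) c) ≤
      ENNReal.ofReal (2 * L ^ 2 * estimationError ν G r σ P c) := by
  have := isMarkovKernel_posteriorKernel (N := N) (ν := ν) (r := r) (σ := σ) hG
  have hA := measurable_posteriorDrift (N := N) (r := r) hG
  have hB := measurable_priorDrift (r := r) hG hP
  have hdiff := norm_sq_posteriorDrift_sub_priorDrift_le (N := N) (r := r) (P := P) hL
  have hint (t : Fin T) : Integrable
      (fun x => ‖posteriorDrift G r t (c, x) - priorDrift G r P t (c, x)‖ ^ 2)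
      (posteriorKernel ν G r σ t.castSucc c) := by
    refine .of_mem_Icc 0 ((2 * L * r t) ^ 2) (by fun_prop) (.of_forall fun x => ?_)
    refine ⟨by positivity, (hdiff t (c, x)).trans ?_⟩
    split_ifs
    · exact mul_le_of_le_one_right (sq_nonneg _) (c.bit_sub_sq_mem_Icc ((hP t).mem_Icc _)).2
    · positivity
  refine (klDiv_gaussianChain_le hA hB hσ c hint).trans (ofReal_le_ofReal ?_)
  rw [estimationError, Finset.mul_sum]
  refine Finset.sum_le_sum fun t _ => ?_
  by_cases hJ : c.index ∈ c.batch t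
  · rw [if_pos hJ, ← integral_const_mul]
    refine integral_mono ((hint t).div_const _)
      ((((hP t).integrable_bit_sub_sq c
        (posteriorKernel ν G r σ t.castSucc c)).const_mul _).const_mul _) fun x => ?_
    have hle := (hdiff t (c, x)).trans_eq (if_pos hJ)
    calc ‖posteriorDrift G r t (c, x) - priorDrift G r P t (c, x)‖ ^ 2 / (2 * σ t ^ 2)
        ≤ (2 * L * r t) ^ 2 * (c.bit - P t (c, x)) ^ 2 / (2 * σ t ^ 2) := by gcongr
      _ = 2 * L ^ 2 * (r t ^ 2 / σ t ^ 2 * (c.bit - P t (c, x)) ^ 2) := by ring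
  · rw [if_neg hJ, mul_zero]
    refine (integral_eq_zero_of_ae (.of_forall fun x => ?_)).le
    have hle := (hdiff t (c, x)).trans_eq (if_neg hJ)
    rw [hle.antisymm (sq_nonneg _), zero_div, Pi.zero_apply]

lemma integral_ghost_sub_train_le (hG : Measurable fun p : E × 𝒵 => G p.1 p.2) {L : ℝ}
    (hL : ∀ x z, ‖G x z‖ ≤ L) (hσ : ∀ t, σ t ≠ 0) (hP : ∀ t, IsBitEstimator (P t))
    {loss : E → 𝒵 → ℝ} (hloss : Measurable fun p : E × 𝒵 => loss p.1 p.2) {a b : ℝ}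
    (hab : ∀ x z, loss x z ∈ Set.Icc a b) {m : Measure (Conditioning N T 𝒵)}
    [IsProbabilityMeasure m] (hm : MeasurePreserving Conditioning.flip m m) :
    ∫ p, (loss (p.2 (Fin.last T)) (p.1.ghost p.1.index) -
        loss (p.2 (Fin.last T)) (p.1.train p.1.index))
        ∂(m ⊗ₘ posteriorKernel ν G r σ (Fin.last T)) ≤
      2 * L * (b - a) * ∫ c, √(estimationError ν G r σ P c) ∂m := by
  have := isMarkovKernel_posteriorKernel (N := N) (ν := ν) (r := r) (σ := σ) hG (Fin.last T)
  have hB := measurable_priorDrift (r := r) hG hP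
  have := isMarkovKernel_gaussianChain (ν := ν) (σ := σ) hB (Fin.last T)
  have hE := estimationError_mem_Icc (ν := ν) (σ := σ) (r := r) hG hP
  obtain ⟨c₀⟩ := m.nonempty_of_neZero
  have hL₀ : 0 ≤ L := (norm_nonneg _).trans (hL 0 (c₀.train c₀.index))
  have hsqrt (c : Conditioning N T 𝒵) : (b - a) * √(2 * (2 * L ^ 2 * estimationError ν G r σ P c)) =
      2 * L * (b - a) * √(estimationError ν G r σ P c) := by
    rw [show ∀ e : ℝ, 2 * (2 * L ^ 2 * e) = (2 * L) ^ 2 * e by intro e; ring,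
      Real.sqrt_mul (sq_nonneg _), Real.sqrt_sq (by positivity)]
    ring
  simp only [← integral_const_mul, ← hsqrt]
  refine integral_compProd_le_of_antisymm hm
    (κ' := gaussianChain ν (priorDrift G r P) σ (Fin.last T))
    (f := fun p => loss (p.2 (Fin.last T)) (p.1.ghost p.1.index) -
      loss (p.2 (Fin.last T)) (p.1.train p.1.index)) (fun c => ?_) ?_ (fun c x => ?_) (fun p => ?_)
    (klDiv_posteriorKernel_le hG hL hσ hP) (fun c => ?_) ?_
  · exact gaussianChain_congr hB (fun t x => priorDrift_flip hP t c x) _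
  · exact Conditioning.measurable_loss_ghost_sub_loss_train hloss
  · exact (congrArg₂ (loss (x (Fin.last T)) · - loss (x (Fin.last T)) ·) c.ghost_flip_index
      c.train_flip_index).trans (neg_sub _ _).symm
  · have hg := hab (p.2 (Fin.last T)) (p.1.ghost p.1.index)
    have ht := hab (p.2 (Fin.last T)) (p.1.train p.1.index)
    constructor <;> linarith [hg.1, hg.2, ht.1, ht.2]
  · exact mul_nonneg (by positivity) (hE c).1
  · refine .of_mem_Icc 0 √(2 * L ^ 2 * ∑ t, r t ^ 2 / σ t ^ 2)
      (((measurable_estimationError hG hP).const_mul _).sqrt.aemeasurable) (.of_forall fun c => ?_)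
    exact ⟨by positivity, by gcongr; exact (hE c).2⟩

end PosteriorKernel

section Estimator

variable {E : Type*} {N T : ℕ} {𝒵 : Type*}

/-- The random variable `(((J, U), S̃), V^T)`. -/
def conditioning {Ω : Type*} (J : Ω → Fin N) (U : Ω → Fin N → Bool) (St : Ω → Fin (2 * N) → 𝒵)
    (V : Fin T → Ω → Finset (Fin N)) (ω : Ω) : Conditioning N T 𝒵 :=
  (((J ω, U ω), St ω), fun s => V s ω)

/-- The data `(θ^{t-1}, J, S̃, U_{J^c}, V^t)` on which the estimate of `U_J` for step `t` may
depend; the missing bit `U_J` is encoded as `none`. -/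
def estimatorInput (t : Fin T) (q : Conditioning N T 𝒵 × (Fin (T + 1) → E)) :
    (((Fin (t.val + 1) → E) × Fin N) × (Fin (2 * N) → 𝒵)) ×
      ((Fin N → Option Bool) × (Fin (t.val + 1) → Finset (Fin N))) :=
  ((((fun k => q.2 (k.castLE (by lia))), q.1.index), q.1.supersample),
    ((fun i => if i = q.1.index then none else some (q.1.bits i)),
      fun k => q.1.batch (k.castLE (by lia))))

lemma estimatorInput_flip (t : Fin T) (c : Conditioning N T 𝒵) (x : Fin (T + 1) → E) :
    estimatorInput t (c.flip, x) = estimatorInput t (c, x) := by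
  refine Prod.ext rfl (Prod.ext (funext fun i => ?_) rfl)
  by_cases hi : i = c.index
  · exact (if_pos hi).trans (if_pos hi).symm
  · refine (if_neg hi).trans (.trans ?_ (if_neg hi).symm)
    exact congrArg some (Function.update_of_ne hi _ _)

variable [MeasurableSpace E] [MeasurableSpace 𝒵]

lemma measurable_estimatorInput (t : Fin T) :
    Measurable fun q : Conditioning N T 𝒵 × (Fin (T + 1) → E) => estimatorInput t q := by
  have hmask : Measurable fun q : Fin N × (Fin N → Bool) =>
      fun i => if i = q.1 then none else some (q.2 i) := measurable_of_countable _
  refine Measurable.prodMk (.prodMk (.prodMk (by fun_prop) ?_) ?_) (.prodMk ?_ ?_)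
  · exact Conditioning.measurable_index.comp measurable_fst
  · exact Conditioning.measurable_supersample.comp measurable_fst
  · exact hmask.comp
      ((Conditioning.measurable_index.prodMk Conditioning.measurable_bits).comp measurable_fst)
  · exact measurable_pi_lambda _ fun k =>
      (measurable_pi_apply _).comp (Conditioning.measurable_batch.comp measurable_fst)

lemma exists_isBitEstimator [NormedAddCommGroup E] {Ω : Type*} {J : Ω → Fin N}
    {U : Ω → Fin N → Bool} {St : Ω → Fin (2 * N) → 𝒵} {V : Fin T → Ω → Finset (Fin N)}
    {x : ℕ → Ω → E} (t : Fin T) {π : Ω → ℝ} (hπ01 : ∀ ω, π ω ∈ Set.Icc (0 : ℝ) 1)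
    (hπ : Measurable[MeasurableSpace.comap (fun ω =>
      ((((fun k : Fin (t.val + 1) => x k.val ω), J ω), St ω),
        ((fun i : Fin N => if i = J ω then none else some (U ω i)),
          (fun k : Fin (t.val + 1) =>
            V ⟨k.val, lt_of_le_of_lt (Nat.lt_succ_iff.mp k.isLt) t.isLt⟩ ω)))) inferInstance] π) :
    ∃ p : Conditioning N T 𝒵 × (Fin (T + 1) → E) → ℝ, IsBitEstimator p ∧
      ∀ ω, p (conditioning J U St V ω, pathUpTo (fun n => x n ω) t.castSucc) = π ω := by
  obtain ⟨f, hf, hfπ⟩ := hπ.exists_eq_measurable_comp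
  -- `f` is only known to be `[0, 1]`-valued on the range of the data, hence the projection.
  refine ⟨fun q => Set.projIcc 0 1 zero_le_one (f (estimatorInput t q)), ⟨?_, ?_, ?_⟩, fun ω => ?_⟩
  · exact (continuous_subtype_val.comp continuous_projIcc).measurable.comp
      (hf.comp (measurable_estimatorInput t))
  · exact fun q => Subtype.coe_prop _
  · intro c y
    rw [estimatorInput_flip]
  · have hinput : estimatorInput t (conditioning J U St V ω,
        pathUpTo (fun n => x n ω) t.castSucc) =
        ((((fun k : Fin (t.val + 1) => x k.val ω), J ω), St ω),
          ((fun i : Fin N => if i = J ω then none else some (U ω i)),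
            fun k : Fin (t.val + 1) => V (k.castLE (by lia)) ω)) := by
      refine Prod.ext (Prod.ext (Prod.ext (funext fun k => ?_) rfl) rfl) rfl
      exact pathUpTo_apply_of_le (x := fun n => x n ω) (k := k.castLE (by lia)) (j := t.castSucc)
        (Fin.le_def.2 (Nat.le_of_lt_succ k.isLt))
    have hval : f (estimatorInput t (conditioning J U St V ω,
        pathUpTo (fun n => x n ω) t.castSucc)) = π ω := by
      rw [hinput, hfπ]
      rfl
    simp only [hval, Set.projIcc_of_mem zero_le_one (hπ01 ω)]

end Estimator

section SGLD

variable {E : Type*} [NormedAddCommGroup E] [InnerProductSpace ℝ E] [FiniteDimensional ℝ E]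
  [MeasurableSpace E] {N T : ℕ} {𝒵 : Type*} [MeasurableSpace 𝒵]
  {Ω : Type*} [MeasurableSpace Ω]

/-- The iterates `θ` of SGLD with constant batch size `K` in the randomized subsample setting, with
super-sample `St`, bits `U`, uniform index `J`, batches `V`, noise `ε`, and gradient `G` of the
loss. The parameters range over an arbitrary Euclidean space `E` instead of `ℝ^d`. -/
structure IsSGLD (μ : Measure Ω) (PZ : Measure 𝒵) (loss : E → 𝒵 → ℝ) (G : E → 𝒵 → E)
    (J : Ω → Fin N) (U : Ω → Fin N → Bool) (St : Ω → Fin (2 * N) → 𝒵)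
    (V : Fin T → Ω → Finset (Fin N)) (K : ℕ) (θ : ℕ → Ω → E) (ε : Fin T → Ω → E)
    (η σ : Fin T → ℝ) : Prop where
  measurable_index : Measurable J
  measurable_bits : Measurable U
  measurable_supersample : Measurable St
  measurable_batch : ∀ t, Measurable (V t)
  measurable_init : Measurable (θ 0)
  measurable_noise : ∀ t, Measurable (ε t)
  measurable_gradient : Measurable fun p : E × 𝒵 => G p.1 p.2
  hasGradientAt : ∀ z x, HasGradientAt (fun y => loss y z) (G x z) x
  index_uniform : ∀ j, μ (J ⁻¹' {j}) = 1 / N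
  law_supersample_bits : μ.map (fun ω => (St ω, U ω)) =
    (Measure.pi fun _ => PZ).prod (Measure.pi fun _ => bern)
  batchSize_pos : 0 < K
  card_batch : ∀ t ω, (V t ω).card = K
  noiseLevel_pos : ∀ t, 0 < σ t
  law_noise : μ.map (fun ω t => ε t ω) = Measure.pi fun _ => stdGaussian E
  indepFun_batch : IndepFun (fun ω => (St ω, U ω)) (fun ω t => V t ω) μ
  indepFun_init : IndepFun (fun ω => ((St ω, U ω), fun t => V t ω)) (θ 0) μ
  indepFun_noise :
    IndepFun (fun ω => (((St ω, U ω), fun t => V t ω), θ 0 ω)) (fun ω t => ε t ω) μ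
  indepFun_index :
    IndepFun (fun ω => ((((St ω, U ω), fun t => V t ω), θ 0 ω), fun t => ε t ω)) J μ
  recursion : ∀ (t : Fin T) ω, θ (t + 1) ω =
    θ t ω - (η t / (V t ω).card) • ∑ i ∈ V t ω, G (θ t ω) (trainSample (St ω) (U ω) i) +
      σ t • ε t ω

namespace IsSGLD

variable {μ : Measure Ω} {PZ : Measure 𝒵} {loss : E → 𝒵 → ℝ} {G : E → 𝒵 → E} {J : Ω → Fin N}
  {U : Ω → Fin N → Bool} {St : Ω → Fin (2 * N) → 𝒵} {V : Fin T → Ω → Finset (Fin N)} {K : ℕ}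
  {θ : ℕ → Ω → E} {ε : Fin T → Ω → E} {η σ : Fin T → ℝ}

lemma measurable_conditioning (h : IsSGLD μ PZ loss G J U St V K θ ε η σ) :
    Measurable (conditioning J U St V) :=
  ((h.measurable_index.prodMk h.measurable_bits).prodMk h.measurable_supersample).prodMk
    (measurable_pi_lambda _ h.measurable_batch)

lemma map_supersample [IsProbabilityMeasure PZ] (h : IsSGLD μ PZ loss G J U St V K θ ε η σ) :
    μ.map St = Measure.pi fun _ => PZ := by
  have hfst := congrArg Measure.fst h.law_supersample_bits
  rwa [Measure.fst_map_prodMk h.measurable_bits, Measure.fst_prod] at hfst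

lemma map_bits [IsProbabilityMeasure PZ] (h : IsSGLD μ PZ loss G J U St V K θ ε η σ) :
    μ.map U = Measure.pi fun _ => bern := by
  have hsnd := congrArg Measure.snd h.law_supersample_bits
  rwa [Measure.snd_map_prodMk h.measurable_supersample, Measure.snd_prod] at hsnd

lemma map_conditioning [IsProbabilityMeasure μ] [IsProbabilityMeasure PZ]
    (h : IsSGLD μ PZ loss G J U St V K θ ε η σ) :
    μ.map (conditioning J U St V) =
      (((μ.map J).prod (Measure.pi fun _ => bern)).prod (Measure.pi fun _ => PZ)).prod
        (μ.map fun ω t => V t ω) := by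
  have hV : Measurable fun ω t => V t ω := measurable_pi_lambda _ h.measurable_batch
  have hJ := h.measurable_index
  have hU := h.measurable_bits
  have hSt := h.measurable_supersample
  have hindepSt : IndepFun St U μ := by
    rw [indepFun_iff_map_prod_eq_prod_map_map hSt.aemeasurable hU.aemeasurable,
      h.map_supersample, h.map_bits, h.law_supersample_bits]
  have hindepJ : IndepFun U J μ :=
    h.indepFun_index.comp measurable_fst.fst.fst.snd measurable_id
  have hindepJU : IndepFun St (fun ω => (U ω, J ω)) μ :=
    indepFun_prodMk_right hSt hU hJ hindepSt
      (h.indepFun_index.comp measurable_fst.fst.fst measurable_id)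
  have hindepV : IndepFun (fun ω t => V t ω) (fun ω => ((St ω, U ω), J ω)) μ :=
    indepFun_prodMk_right hV (hSt.prodMk hU) hJ h.indepFun_batch.symm <| h.indepFun_index.comp
      (measurable_fst.fst.snd.prodMk measurable_fst.fst.fst) measurable_id
  have hJUSt := hindepV.comp measurable_id
    ((measurable_snd.prodMk measurable_fst.snd).prodMk measurable_fst.fst)
  have hJU := hindepJU.comp measurable_id measurable_swap
  rw [← h.map_supersample, ← h.map_bits,
    ← (indepFun_iff_map_prod_eq_prod_map_map hJ.aemeasurable hU.aemeasurable).1 hindepJ.symm,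
    ← (indepFun_iff_map_prod_eq_prod_map_map (hJ.prodMk hU).aemeasurable hSt.aemeasurable).1
      hJU.symm,
    ← (indepFun_iff_map_prod_eq_prod_map_map ((hJ.prodMk hU).prodMk hSt).aemeasurable
      hV.aemeasurable).1 hJUSt.symm]
  rfl

lemma measurePreserving_flip [IsProbabilityMeasure μ] [IsProbabilityMeasure PZ]
    (h : IsSGLD μ PZ loss G J U St V K θ ε η σ) :
    MeasurePreserving Conditioning.flip (μ.map (conditioning J U St V))
      (μ.map (conditioning J U St V)) := by
  have := Measure.isProbabilityMeasure_map (μ := μ) h.measurable_index.aemeasurable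
  have := Measure.isProbabilityMeasure_map (μ := μ)
    (measurable_pi_lambda (fun ω t => V t ω) h.measurable_batch).aemeasurable
  rw [h.map_conditioning]
  exact Conditioning.measurePreserving_flip _ _ _

lemma recursion_sgldDrift (h : IsSGLD μ PZ loss G J U St V K θ ε η σ) (t : Fin T) (ω : Ω) :
    θ (t + 1) ω =
      sgldDrift G (fun t => η t / K) t
          ((trainSample (St ω) (U ω), fun t => V t ω), pathUpTo (fun n => θ n ω) t.castSucc) +
        σ t • ε t ω := by
  have hlast : pathUpTo (fun n => θ n ω) t.castSucc t.castSucc = θ t ω :=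
    pathUpTo_apply_of_le le_rfl
  simp only [h.recursion, h.card_batch, sgldDrift, sgdStep, hlast]

lemma measurable_trainSample (h : IsSGLD μ PZ loss G J U St V K θ ε η σ) :
    Measurable fun ω => trainSample (St ω) (U ω) :=
  Conditioning.measurable_train.comp h.measurable_conditioning

lemma measurable_ghostSample (h : IsSGLD μ PZ loss G J U St V K θ ε η σ) :
    Measurable fun ω => ghostSample (St ω) (U ω) :=
  Conditioning.measurable_ghost.comp h.measurable_conditioning

lemma map_trainSample_ghostSample [IsProbabilityMeasure PZ]
    (h : IsSGLD μ PZ loss G J U St V K θ ε η σ) :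
    μ.map (fun ω => (trainSample (St ω) (U ω), ghostSample (St ω) (U ω))) =
      (Measure.pi fun _ => PZ).prod (Measure.pi fun _ => PZ) := by
  have hsplit := measurePreserving_trainSample_ghostSample PZ (Measure.pi fun _ : Fin N => bern)
  rw [← hsplit.map_eq, ← h.law_supersample_bits, Measure.map_map hsplit.measurable
    (h.measurable_supersample.prodMk h.measurable_bits)]
  rfl

lemma map_ghostSample [IsProbabilityMeasure PZ] (h : IsSGLD μ PZ loss G J U St V K θ ε η σ) :
    μ.map (fun ω => ghostSample (St ω) (U ω)) = Measure.pi fun _ => PZ := by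
  have hsnd := congrArg Measure.snd h.map_trainSample_ghostSample
  rwa [Measure.snd_map_prodMk h.measurable_trainSample, Measure.snd_prod] at hsnd

lemma indepFun_ghostSample_trainSample [IsProbabilityMeasure μ] [IsProbabilityMeasure PZ]
    (h : IsSGLD μ PZ loss G J U St V K θ ε η σ) :
    IndepFun (fun ω => ghostSample (St ω) (U ω)) (fun ω => trainSample (St ω) (U ω)) μ := by
  have hfst := congrArg Measure.fst h.map_trainSample_ghostSample
  rw [Measure.fst_map_prodMk h.measurable_ghostSample, Measure.fst_prod] at hfst
  refine .symm ((indepFun_iff_map_prod_eq_prod_map_map h.measurable_trainSample.aemeasurable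
    h.measurable_ghostSample.aemeasurable).2 ?_)
  rw [hfst, h.map_ghostSample, h.map_trainSample_ghostSample]

variable [BorelSpace E]

lemma measurable_pathUpTo (h : IsSGLD μ PZ loss G J U St V K θ ε η σ) (j : Fin (T + 1)) :
    Measurable fun ω => pathUpTo (fun n => θ n ω) j :=
  measurable_pathUpTo_of_recursion (measurable_posteriorDrift h.measurable_gradient)
    h.measurable_conditioning h.measurable_init h.recursion_sgldDrift j
    fun t _ => h.measurable_noise t

lemma map_conditioning_pathUpTo [IsProbabilityMeasure μ]
    (h : IsSGLD μ PZ loss G J U St V K θ ε η σ) (j : Fin (T + 1)) :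
    μ.map (fun ω => (conditioning J U St V ω, pathUpTo (fun n => θ n ω) j)) =
      μ.map (conditioning J U St V) ⊗ₘ
        posteriorKernel (μ.map (θ 0)) G (fun t => η t / K) σ j := by
  have hV : Measurable fun ω t => V t ω := measurable_pi_lambda _ h.measurable_batch
  have hε : Measurable fun ω t => ε t ω := measurable_pi_lambda _ h.measurable_noise
  have hSU := h.measurable_supersample.prodMk h.measurable_bits
  have hindep₀ : IndepFun (θ 0) (fun ω => (((St ω, U ω), fun t => V t ω), J ω)) μ :=
    indepFun_prodMk_right h.measurable_init (hSU.prodMk hV) h.measurable_index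
      h.indepFun_init.symm <| h.indepFun_index.comp
        (measurable_fst.snd.prodMk measurable_fst.fst) measurable_id
  have hindepε : IndepFun (fun ω t => ε t ω)
      (fun ω => ((((St ω, U ω), fun t => V t ω), θ 0 ω), J ω)) μ :=
    indepFun_prodMk_right hε ((hSU.prodMk hV).prodMk h.measurable_init) h.measurable_index
      h.indepFun_noise.symm <| h.indepFun_index.comp measurable_swap measurable_id
  have hreorder : Measurable fun p : (((Fin (2 * N) → 𝒵) × (Fin N → Bool)) ×
      (Fin T → Finset (Fin N))) × Fin N => (((p.2, p.1.1.2), p.1.1.1), p.1.2) := by fun_prop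
  exact map_prodMk_pathUpTo (measurable_posteriorDrift h.measurable_gradient)
    h.measurable_conditioning h.measurable_init h.measurable_noise h.recursion_sgldDrift
    (hindep₀.symm.comp hreorder measurable_id)
    (hindepε.symm.comp ((hreorder.comp (measurable_fst.fst.prodMk measurable_snd)).prodMk
      measurable_fst.snd) measurable_id) h.law_noise j

end IsSGLD

end SGLD

section GeneralizationError

variable {E : Type*} [NormedAddCommGroup E] [InnerProductSpace ℝ E] [FiniteDimensional ℝ E]
  [MeasurableSpace E] [BorelSpace E] {N T : ℕ} {𝒵 : Type*} [MeasurableSpace 𝒵]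
  {Ω : Type*} [mΩ : MeasurableSpace Ω] {μ : Measure Ω} {PZ : Measure 𝒵}
  {loss : E → 𝒵 → ℝ} {G : E → 𝒵 → E} {J : Ω → Fin N}
  {U : Ω → Fin N → Bool} {St : Ω → Fin (2 * N) → 𝒵} {V : Fin T → Ω → Finset (Fin N)} {K : ℕ}
  {θ : ℕ → Ω → E} {ε : Fin T → Ω → E} {η σ : Fin T → ℝ}

namespace IsSGLD

lemma measurable_last_of_measurable_past (h : IsSGLD μ PZ loss G J U St V K θ ε η σ) :
    ∀ m : MeasurableSpace Ω,
      (Measurable[m] fun ω =>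
        (((trainSample (St ω) (U ω), fun t => V t ω), θ 0 ω), fun t => ε t ω)) →
      Measurable[m] (θ T) := by
  have hrec := h.recursion_sgldDrift
  have hdrift := measurable_sgldDrift (N := N) (r := fun t => η t / K) h.measurable_gradient
  intro m hpast
  have hpath := measurable_pathUpTo_of_recursion hdrift hpast.fst.fst hpast.fst.snd hrec
    (Fin.last T) fun t _ => (measurable_pi_apply t).comp hpast.snd
  exact pathUpTo_last θ ▸ (measurable_pi_apply (Fin.last T)).comp hpath

lemma measurable_last (h : IsSGLD μ PZ loss G J U St V K θ ε η σ) : Measurable (θ T) :=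
  h.measurable_last_of_measurable_past mΩ <|
    ((h.measurable_trainSample.prodMk (measurable_pi_lambda _ h.measurable_batch)).prodMk
      h.measurable_init).prodMk (measurable_pi_lambda _ h.measurable_noise)

lemma indepFun_last_samples_index (h : IsSGLD μ PZ loss G J U St V K θ ε η σ) :
    IndepFun (fun ω => (θ T ω, ghostSample (St ω) (U ω), trainSample (St ω) (U ω))) J μ := by
  refine indepFun_of_measurable_comap h.indepFun_index ?_
  let data := fun ω => ((((St ω, U ω), fun t => V t ω), θ 0 ω), fun t => ε t ω)
  have hlast := h.measurable_last_of_measurable_past (.comap data inferInstance)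
  let := MeasurableSpace.comap data inferInstance
  have hdata : Measurable data := comap_measurable data
  have hSU := hdata.fst.fst.fst
  have hghost : Measurable fun ω => ghostSample (St ω) (U ω) :=
    measurable_pi_lambda _ fun i => (measurable_ghostSample_apply i).comp hSU
  have htrain : Measurable fun ω => trainSample (St ω) (U ω) :=
    measurable_pi_lambda _ fun i => (measurable_trainSample_apply i).comp hSU
  exact (hlast
    (((htrain.prodMk hdata.fst.fst.snd).prodMk hdata.fst.snd).prodMk hdata.snd)).prodMk
      (hghost.prodMk htrain)

variable [IsProbabilityMeasure μ]

lemma integrable_loss (h : IsSGLD μ PZ loss G J U St V K θ ε η σ)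
    (hloss : Measurable fun p : E × 𝒵 => loss p.1 p.2) {a b : ℝ}
    (hab : ∀ x z, loss x z ∈ Set.Icc a b) {z : Ω → 𝒵} (hz : Measurable z) :
    Integrable (fun ω => loss (θ T ω) (z ω)) μ :=
  .of_mem_Icc a b (hloss.comp (h.measurable_last.prodMk hz)).aemeasurable
    (.of_forall fun _ => hab _ _)

lemma integral_ghost_sub_train_index_eq (h : IsSGLD μ PZ loss G J U St V K θ ε η σ)
    (hloss : Measurable fun p : E × 𝒵 => loss p.1 p.2) {a b : ℝ}
    (hab : ∀ x z, loss x z ∈ Set.Icc a b) :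
    ∫ ω, (loss (θ T ω) (ghostSample (St ω) (U ω) (J ω)) -
        loss (θ T ω) (trainSample (St ω) (U ω) (J ω))) ∂μ =
      ∫ ω, 1 / N * ∑ i, (loss (θ T ω) (ghostSample (St ω) (U ω) i) -
        loss (θ T ω) (trainSample (St ω) (U ω) i)) ∂μ :=
  integral_apply_of_indepFun_of_uniform h.measurable_index
    (h.measurable_last.prodMk (h.measurable_ghostSample.prodMk h.measurable_trainSample))
    h.index_uniform h.indepFun_last_samples_index
    (F := fun i y => loss y.1 (y.2.1 i) - loss y.1 (y.2.2 i)) (a := a - b) (b := b - a)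
    (fun i => (hloss.comp (by fun_prop : Measurable fun y : E × (Fin N → 𝒵) × (Fin N → 𝒵) =>
      (y.1, y.2.1 i))).sub (hloss.comp (by fun_prop : Measurable
        fun y : E × (Fin N → 𝒵) × (Fin N → 𝒵) => (y.1, y.2.2 i))))
    fun i y => ⟨sub_le_sub (hab _ _).1 (hab _ _).2, sub_le_sub (hab _ _).2 (hab _ _).1⟩

lemma integral_ghost_sub_train_index_eq_compProd (h : IsSGLD μ PZ loss G J U St V K θ ε η σ)
    (hloss : Measurable fun p : E × 𝒵 => loss p.1 p.2) :
    ∫ ω, (loss (θ T ω) (ghostSample (St ω) (U ω) (J ω)) -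
        loss (θ T ω) (trainSample (St ω) (U ω) (J ω))) ∂μ =
      ∫ p, (loss (p.2 (Fin.last T)) (p.1.ghost p.1.index) -
          loss (p.2 (Fin.last T)) (p.1.train p.1.index))
        ∂(μ.map (conditioning J U St V) ⊗ₘ
          posteriorKernel (μ.map (θ 0)) G (fun t => η t / K) σ (Fin.last T)) := by
  rw [← h.map_conditioning_pathUpTo, integral_map
    (h.measurable_conditioning.prodMk (h.measurable_pathUpTo _)).aemeasurable
    (Conditioning.measurable_loss_ghost_sub_loss_train hloss).aestronglyMeasurable]
  refine integral_congr_ae (.of_forall fun ω => ?_)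
  simp only [congrFun (pathUpTo_last θ) ω]
  rfl

lemma estimationError_conditioning_ae_eq (h : IsSGLD μ PZ loss G J U St V K θ ε η σ)
    {P : Fin T → Conditioning N T 𝒵 × (Fin (T + 1) → E) → ℝ} (hP : ∀ t, IsBitEstimator (P t))
    {π : Fin T → Ω → ℝ}
    (hPπ : ∀ t ω, P t (conditioning J U St V ω, pathUpTo (fun n => θ n ω) t.castSucc) = π t ω) :
    (fun ω => estimationError (μ.map (θ 0)) G (fun t => η t / K) σ P (conditioning J U St V ω))
      =ᵐ[μ] fun ω => (1 / K) ^ 2 * ∑ t, if J ω ∈ V t ω then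
        (μ[fun ω' => η t ^ 2 / σ t ^ 2 * ((if U ω' (J ω') then (1 : ℝ) else 0) - π t ω') ^ 2 |
          MeasurableSpace.comap (conditioning J U St V) inferInstance]) ω else 0 := by
  have := Measure.isProbabilityMeasure_map (μ := μ) h.measurable_init.aemeasurable
  have := isMarkovKernel_posteriorKernel (N := N) (ν := μ.map (θ 0)) (r := fun t => η t / K)
    (σ := σ) h.measurable_gradient
  have herr (t : Fin T) : Measurable fun q : Conditioning N T 𝒵 × (Fin (T + 1) → E) =>
      η t ^ 2 / σ t ^ 2 * (q.1.bit - P t q) ^ 2 :=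
    (((Conditioning.measurable_bit.comp measurable_fst).sub
      (hP t).measurable).pow_const 2).const_mul _
  have herr_mem (t : Fin T) (q) :
      η t ^ 2 / σ t ^ 2 * (q.1.bit - P t q) ^ 2 ∈ Set.Icc 0 (η t ^ 2 / σ t ^ 2) := by
    have hbit := q.1.bit_sub_sq_mem_Icc ((hP t).mem_Icc q)
    have hw : 0 ≤ η t ^ 2 / σ t ^ 2 := by positivity
    exact ⟨mul_nonneg hw hbit.1, mul_le_of_le_one_right hw hbit.2⟩
  have hcond (t : Fin T) := condExp_ae_eq_integral_of_map_eq_compProd h.measurable_conditioning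
    (h.measurable_pathUpTo t.castSucc) (h.map_conditioning_pathUpTo t.castSucc) (herr t)
    (.of_mem_Icc 0 (η t ^ 2 / σ t ^ 2) ((herr t).comp (h.measurable_conditioning.prodMk
      (h.measurable_pathUpTo t.castSucc))).aemeasurable (.of_forall fun _ => herr_mem t _))
  filter_upwards [ae_all_iff.2 hcond] with ω hω
  simp only [hPπ] at hω
  rw [estimationError, Finset.mul_sum]
  refine Finset.sum_congr rfl fun t _ => ?_
  rw [mul_ite, mul_zero]
  refine if_congr Iff.rfl ?_ rfl
  refine Eq.trans ?_ (congrArg ((1 / (K : ℝ)) ^ 2 * ·) (hω t).symm)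
  rw [← integral_const_mul]
  congr with x
  ring

variable [IsProbabilityMeasure PZ]

lemma indepFun_last_ghostSample (h : IsSGLD μ PZ loss G J U St V K θ ε η σ) :
    IndepFun (θ T) (fun ω => ghostSample (St ω) (U ω)) μ := by
  have hV : Measurable fun ω t => V t ω := measurable_pi_lambda _ h.measurable_batch
  have hε : Measurable fun ω t => ε t ω := measurable_pi_lambda _ h.measurable_noise
  have htrain := h.measurable_trainSample
  have hghost := h.measurable_ghostSample
  have hsplit : Measurable fun p : (Fin (2 * N) → 𝒵) × (Fin N → Bool) =>
      (ghostSample p.1 p.2, trainSample p.1 p.2) :=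
    (measurable_pi_lambda _ measurable_ghostSample_apply).prodMk
      (measurable_pi_lambda _ measurable_trainSample_apply)
  have hsplitV : Measurable fun p : ((Fin (2 * N) → 𝒵) × (Fin N → Bool)) ×
      (Fin T → Finset (Fin N)) =>
      (ghostSample p.1.1 p.1.2, (trainSample p.1.1 p.1.2, p.2)) :=
    (hsplit.fst.comp measurable_fst).prodMk
      ((hsplit.snd.comp measurable_fst).prodMk measurable_snd)
  refine indepFun_of_measurable_comap (.symm ?_)
    (h.measurable_last_of_measurable_past _ (comap_measurable _))
  refine indepFun_prodMk_right hghost ((htrain.prodMk hV).prodMk h.measurable_init) hε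
    (indepFun_prodMk_right hghost (htrain.prodMk hV) h.measurable_init
      (indepFun_prodMk_right hghost htrain hV h.indepFun_ghostSample_trainSample ?_) ?_) ?_
  · exact h.indepFun_batch.comp hsplit measurable_id
  · exact h.indepFun_init.comp hsplitV measurable_id
  · exact h.indepFun_noise.comp ((hsplitV.fst.comp measurable_fst).prodMk
      ((hsplitV.snd.comp measurable_fst).prodMk measurable_snd)) measurable_id

lemma integrable_integral_loss (h : IsSGLD μ PZ loss G J U St V K θ ε η σ)
    (hloss : Measurable fun p : E × 𝒵 => loss p.1 p.2) {a b : ℝ}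
    (hab : ∀ x z, loss x z ∈ Set.Icc a b) :
    Integrable (fun ω => ∫ z, loss (θ T ω) z ∂PZ) μ :=
  .of_mem_Icc a b
    (hloss.stronglyMeasurable.integral_prod_right.measurable.comp h.measurable_last).aemeasurable <|
    .of_forall fun _ => (convex_Icc a b).integral_mem isClosed_Icc (.of_forall (hab _)) <|
      .of_mem_Icc a b (hloss.comp measurable_prodMk_left).aemeasurable (.of_forall (hab _))

lemma integral_loss_ghostSample (h : IsSGLD μ PZ loss G J U St V K θ ε η σ)
    (hloss : Measurable fun p : E × 𝒵 => loss p.1 p.2) {a b : ℝ}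
    (hab : ∀ x z, loss x z ∈ Set.Icc a b) (i : Fin N) :
    ∫ ω, loss (θ T ω) (ghostSample (St ω) (U ω) i) ∂μ = ∫ ω, ∫ z, loss (θ T ω) z ∂PZ ∂μ := by
  have hlaw : μ.map (fun ω => ghostSample (St ω) (U ω) i) = PZ :=
    map_eq_of_map_eq_pi (e := fun i ω => ghostSample (St ω) (U ω) i)
      (fun i => (measurable_pi_apply i).comp h.measurable_ghostSample) h.map_ghostSample i
  rw [← hlaw]
  exact integral_prodMk_of_indepFun h.measurable_last
    ((measurable_pi_apply i).comp h.measurable_ghostSample)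
    (h.indepFun_last_ghostSample.comp measurable_id (measurable_pi_apply i)) hloss
    fun p => hab p.1 p.2

lemma integral_gen_eq (h : IsSGLD μ PZ loss G J U St V K θ ε η σ)
    (hloss : Measurable fun p : E × 𝒵 => loss p.1 p.2) {a b : ℝ}
    (hab : ∀ x z, loss x z ∈ Set.Icc a b) :
    ∫ ω, ((∫ z, loss (θ T ω) z ∂PZ) -
        1 / N * ∑ i, loss (θ T ω) (trainSample (St ω) (U ω) i)) ∂μ =
      ∫ ω, (loss (θ T ω) (ghostSample (St ω) (U ω) (J ω)) -
        loss (θ T ω) (trainSample (St ω) (U ω) (J ω))) ∂μ := by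
  have hN : (N : ℝ) ≠ 0 := by
    obtain ⟨ω⟩ := μ.nonempty_of_neZero
    exact Nat.cast_ne_zero.2 (J ω).pos.ne'
  have hghost (i : Fin N) : Integrable (fun ω => loss (θ T ω) (ghostSample (St ω) (U ω) i)) μ :=
    h.integrable_loss hloss hab ((measurable_pi_apply i).comp h.measurable_ghostSample)
  have htrain (i : Fin N) : Integrable (fun ω => loss (θ T ω) (trainSample (St ω) (U ω) i)) μ :=
    h.integrable_loss hloss hab ((measurable_pi_apply i).comp h.measurable_trainSample)
  calc ∫ ω, ((∫ z, loss (θ T ω) z ∂PZ) -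
        1 / N * ∑ i, loss (θ T ω) (trainSample (St ω) (U ω) i)) ∂μ
      = (∫ ω, ∫ z, loss (θ T ω) z ∂PZ ∂μ) -
          1 / N * ∑ i, ∫ ω, loss (θ T ω) (trainSample (St ω) (U ω) i) ∂μ := by
        rw [integral_sub (h.integrable_integral_loss hloss hab)
          ((integrable_finsetSum _ fun i _ => htrain i).const_mul _),
          integral_const_mul, integral_finsetSum _ fun i _ => htrain i]
    _ = 1 / N * ∑ i : Fin N, ((∫ ω, loss (θ T ω) (ghostSample (St ω) (U ω) i) ∂μ) -
          ∫ ω, loss (θ T ω) (trainSample (St ω) (U ω) i) ∂μ) := by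
        simp only [h.integral_loss_ghostSample hloss hab, Finset.sum_sub_distrib, Finset.sum_const,
          Finset.card_univ, Fintype.card_fin, nsmul_eq_mul]
        field_simp
    _ = ∫ ω, 1 / N * ∑ i, (loss (θ T ω) (ghostSample (St ω) (U ω) i) -
          loss (θ T ω) (trainSample (St ω) (U ω) i)) ∂μ := by
        rw [integral_const_mul, integral_finsetSum _ fun i _ => (hghost i).sub' (htrain i)]
        simp only [integral_sub (hghost _) (htrain _)]
    _ = _ := (h.integral_ghost_sub_train_index_eq hloss hab).symm

end IsSGLD

end GeneralizationError

theorem stmt15_general {E : Type*} [NormedAddCommGroup E] [InnerProductSpace ℝ E]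
    [FiniteDimensional ℝ E] [MeasurableSpace E] [BorelSpace E] {𝒵 : Type*} [MeasurableSpace 𝒵]
    {Ω : Type*} [MeasurableSpace Ω] {μ : Measure Ω} [IsProbabilityMeasure μ] {N T K : ℕ}
    {PZ : Measure 𝒵} [IsProbabilityMeasure PZ] {loss : E → 𝒵 → ℝ} {G : E → 𝒵 → E} {J : Ω → Fin N}
    {U : Ω → Fin N → Bool} {St : Ω → Fin (2 * N) → 𝒵} {V : Fin T → Ω → Finset (Fin N)}
    {θ : ℕ → Ω → E} {ε : Fin T → Ω → E} {η σ : Fin T → ℝ}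
    (h : IsSGLD μ PZ loss G J U St V K θ ε η σ)
    (hloss : Measurable fun p : E × 𝒵 => loss p.1 p.2) {a b : ℝ}
    (hab : ∀ x z, loss x z ∈ Set.Icc a b) {L : ℝ} (hL : ∀ x z, ‖G x z‖ ≤ L)
    {π : Fin T → Ω → ℝ} (hπ01 : ∀ t ω, π t ω ∈ Set.Icc (0 : ℝ) 1)
    (hπ : ∀ t : Fin T,
      Measurable[MeasurableSpace.comap (fun ω =>
        ((((fun k : Fin (t.val + 1) => θ k.val ω), J ω), St ω),
          ((fun i : Fin N => if i = J ω then none else some (U ω i)),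
            (fun k : Fin (t.val + 1) =>
              V ⟨k.val, lt_of_le_of_lt (Nat.lt_succ_iff.mp k.isLt) t.isLt⟩ ω)))) inferInstance]
        (π t)) :
    ∫ ω, ((∫ z, loss (θ T ω) z ∂PZ) -
        1 / N * ∑ i, loss (θ T ω) (trainSample (St ω) (U ω) i)) ∂μ ≤
      2 * L / K * (b - a) *
        ∫ ω, √(∑ t, if J ω ∈ V t ω then
          (μ[fun ω' => η t ^ 2 / σ t ^ 2 * ((if U ω' (J ω') then (1 : ℝ) else 0) - π t ω') ^ 2 |
            MeasurableSpace.comap (conditioning J U St V) inferInstance]) ω else 0) ∂μ := by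
  choose P hP hPπ using fun t => exists_isBitEstimator t (hπ01 t) (hπ t)
  have := Measure.isProbabilityMeasure_map (μ := μ) h.measurable_init.aemeasurable
  have := Measure.isProbabilityMeasure_map (μ := μ) h.measurable_conditioning.aemeasurable
  rw [h.integral_gen_eq hloss hab, h.integral_ghost_sub_train_index_eq_compProd hloss]
  refine (integral_ghost_sub_train_le h.measurable_gradient hL (fun t => (h.noiseLevel_pos t).ne')
    hP hloss hab h.measurePreserving_flip).trans_eq ?_
  rw [integral_map h.measurable_conditioning.aemeasurable
    (measurable_estimationError h.measurable_gradient hP).sqrt.aestronglyMeasurable,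
    integral_congr_ae <| (h.estimationError_conditioning_ae_eq hP hPπ).mono fun _ hω =>
      congrArg Real.sqrt hω]
  simp only [Real.sqrt_mul (sq_nonneg (1 / (K : ℝ))),
    Real.sqrt_sq (by positivity : 0 ≤ 1 / (K : ℝ)), integral_const_mul]
  ring

/-- Corollary 1, Lipschitz case with constant batch size:
`E[gen(W,S)] ≤ (2L/K)(b−a) E_{(J,S̃,U,V^T)}[ sqrt( Σ_{t ∈ 𝒯_J(V^T)}
E_t[ (η_t²/σ_t²) (U_J − π_{J,t})² ] ) ]`. -/
theorem stmt15
    {𝒵 : Type*} [MeasurableSpace 𝒵] [StandardBorelSpace 𝒵] [Nonempty 𝒵]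
    {Ω : Type*} [MeasurableSpace Ω] (μ : Measure Ω) [IsProbabilityMeasure μ]
    (N d T : ℕ) (hN : 0 < N)
    (PZ : Measure 𝒵) [IsProbabilityMeasure PZ]
    (St : Ω → Fin (2 * N) → 𝒵) (U : Ω → Fin N → Bool)
    (hSt : Measurable St) (hU : Measurable U)
    -- `S̃` is i.i.d. `P_Z`, `U` is i.i.d. Bernoulli(1/2), and they are independent
    (hlaw : μ.map (fun ω => (St ω, U ω)) =
      (Measure.pi fun _ : Fin (2 * N) => PZ).prod (Measure.pi fun _ : Fin N => bern))
    -- the loss, bounded in `[a,b]`, and its gradient in the parameter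
    (loss : EuclideanSpace ℝ (Fin d) → 𝒵 → ℝ) (a b : ℝ)
    (hloss : Measurable fun p : EuclideanSpace ℝ (Fin d) × 𝒵 => loss p.1 p.2)
    (hab : ∀ θ z, loss θ z ∈ Set.Icc a b)
    (G : EuclideanSpace ℝ (Fin d) → 𝒵 → EuclideanSpace ℝ (Fin d))
    (hG : Measurable fun p : EuclideanSpace ℝ (Fin d) × 𝒵 => G p.1 p.2)
    (hgrad : ∀ (z : 𝒵) (θ₀ : EuclideanSpace ℝ (Fin d)),
      HasGradientAt (fun θ' => loss θ' z) (G θ₀ z) θ₀)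
    -- batches, iterates, noise, step sizes and noise levels
    (V : Fin T → Ω → Finset (Fin N)) (hV : ∀ t, Measurable (V t))
    (hVne : ∀ t ω, (V t ω).Nonempty)
    -- the loss is `L`-Lipschitz in the parameter and all batches have constant size `K`
    (L : ℝ) (hL : ∀ θ₀ z, ‖G θ₀ z‖ ≤ L)
    (K : ℕ) (hK : 0 < K) (hVcard : ∀ t ω, (V t ω).card = K)
    (θ : ℕ → Ω → EuclideanSpace ℝ (Fin d)) (hθ : ∀ t, Measurable (θ t))
    (ε : Fin T → Ω → EuclideanSpace ℝ (Fin d)) (hε : ∀ t, Measurable (ε t))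
    (η σn : Fin T → ℝ) (hη : ∀ t, 0 < η t) (hσn : ∀ t, 0 < σn t)
    -- the batches are independent of `(S̃, U)`
    (hVindep : IndepFun (fun ω => (St ω, U ω)) (fun ω => fun t => V t ω) μ)
    -- the initialization is independent of `(S̃, U, V^T)`
    (hθ0indep : IndepFun (fun ω => ((St ω, U ω), fun t => V t ω)) (θ 0) μ)
    -- the Gaussian noises are i.i.d. standard normal …
    (hεlaw : μ.map (fun ω => fun p : Fin T × Fin d => ε p.1 ω p.2) =
      Measure.pi fun _ : Fin T × Fin d => gaussianReal 0 1)
    -- … and independent of everything else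
    (hεindep : IndepFun (fun ω => (((St ω, U ω), fun t => V t ω), θ 0 ω))
      (fun ω => fun p : Fin T × Fin d => ε p.1 ω p.2) μ)
    -- the SGLD recursion
    (hrec : ∀ (t : Fin T) (ω : Ω),
      θ (t.val + 1) ω =
        θ t.val ω - (η t / ((V t ω).card : ℝ)) •
            (∑ i ∈ V t ω, G (θ t.val ω) (St ω (subIdx N i (U ω i)))) +
          σn t • ε t ω)
    -- `J` is uniform on `{1,…,N}` and independent of everything else
    (J : Ω → Fin N) (hJ : Measurable J)
    (hJunif : ∀ j : Fin N, μ (J ⁻¹' {j}) = 1 / N)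
    (hJindep : IndepFun
      (fun ω => ((((St ω, U ω), fun t => V t ω), θ 0 ω),
        fun p : Fin T × Fin d => ε p.1 ω p.2)) J μ)
    -- the estimates `π_{J,t} ∈ [0,1]`, measurable w.r.t. `(θ^{t−1}, J, S̃, U_{J^c}, V^t)`
    (π : Fin T → Ω → ℝ) (hπ01 : ∀ t ω, π t ω ∈ Set.Icc (0 : ℝ) 1)
    (hπ : ∀ t : Fin T,
      Measurable[MeasurableSpace.comap (fun ω =>
        ((((fun k : Fin (t.val + 1) => θ k.val ω), J ω), St ω),
          ((fun i : Fin N => if i = J ω then none else some (U ω i)),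
            (fun k : Fin (t.val + 1) =>
              V ⟨k.val, lt_of_le_of_lt (Nat.lt_succ_iff.mp k.isLt) t.isLt⟩ ω)))) inferInstance]
        (π t)) :
    ∫ ω, ((∫ z, loss (θ T ω) z ∂PZ) -
        (1 / N : ℝ) * ∑ i, loss (θ T ω) (St ω (subIdx N i (U ω i)))) ∂μ ≤
      (2 * L / K) * (b - a) *
        ∫ ω, Real.sqrt (∑ t : Fin T,
          if J ω ∈ V t ω then
            (μ[fun ω' =>
                (η t ^ 2 / σn t ^ 2) *
                ((if U ω' (J ω') then (1 : ℝ) else 0) - π t ω') ^ 2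
              | MeasurableSpace.comap
                  (fun ω'' => (((J ω'', U ω''), St ω''), fun s => V s ω''))
                  inferInstance]) ω
          else 0) ∂μ := by
  have hcurry : Measurable fun q : Fin T × Fin d → ℝ =>
      fun t => (WithLp.toLp 2 fun k => q (t, k) : EuclideanSpace ℝ (Fin d)) := by fun_prop
  have h : IsSGLD μ PZ loss G J U St V K θ ε η σn :=
    { measurable_index := hJ
      measurable_bits := hU
      measurable_supersample := hSt
      measurable_batch := hV
      measurable_init := hθ 0
      measurable_noise := hε
      measurable_gradient := hG
      hasGradientAt := hgrad
      index_uniform := hJunif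
      law_supersample_bits := hlaw
      batchSize_pos := hK
      card_batch := hVcard
      noiseLevel_pos := hσn
      law_noise := map_eq_pi_stdGaussian hε hεlaw
      indepFun_batch := hVindep
      indepFun_init := hθ0indep
      indepFun_noise := hεindep.comp measurable_id hcurry
      indepFun_index := hJindep.comp (measurable_fst.prodMk (hcurry.comp measurable_snd))
        measurable_id
      recursion := hrec }
  exact stmt15_general h hloss hab hL hπ01 hπ
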